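/- arXiv:2201.07608 — 2 statements merged into one kernel-verified Lean document; each statement's English description precedes it below -/
import Mathlib

section
/- Let η : ℝ → (0,∞) be C¹ and 1-periodic, and let v : closure(Ω_η) → ℝ² be C², 1-periodic in x, divergence-free (∂ₓv₁ + ∂_z v₂ = 0 on Ω_η), with v(x,0) = 0 and with purely vertical trace on the top boundary, i.e. v₁(x, η(x)) = 0 for all x. Then ∫_{Ω_η} |∇v|² dx dz = 2·∫_{Ω_η} |D(v)|² dx dz, where D(v) = (∇v + (∇v)ᵀ)/2 is the symmetric part of the gradient and |·| denotes the Frobenius norm. -/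
open MeasureTheory Set

/-!
Pointwise, `|∇v|² + (div v)² = 2 |D(v)|² + 2 det ∇v`. The Jacobian determinant is a null Lagrangian,
`det ∇v = ∂ₓ(v₁ ∂_z v₂) - ∂_z(v₁ ∂ₓ v₂)`, so its integral is a boundary flux in which every term
carries the factor `v₁`: on the two graphs the flux vanishes because `v₁` does, and the two lateral
sides cancel by periodicity. As the graphs are only `C¹`, the divergence theorem for the region
between them is obtained from the Leibniz rule for an integral with moving endpoints.
-/

section ParametricIntegral

variable {E : Type*} [NormedAddCommGroup E] [NormedSpace ℝ E]

theorem hasDerivAt_intervalIntegral_of_continuous_deriv {f f' : ℝ → ℝ → E}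
    (hf : ∀ x t, HasDerivAt (f · t) (f' x t) x) (hfc : ∀ x, Continuous (f x))
    (hf'c : Continuous ↿f') (a b x : ℝ) :
    HasDerivAt (fun y => ∫ t in a..b, f y t) (∫ t in a..b, f' x t) x := by
  obtain ⟨C, hC⟩ := ((isCompact_closedBall x 1).prod
    (isCompact_uIcc (a := a) (b := b))).exists_bound_of_continuousOn hf'c.continuousOn
  refine (intervalIntegral.hasDerivAt_integral_of_dominated_loc_of_deriv_le
    (bound := fun _ => C) (Metric.closedBall_mem_nhds x one_pos)
    (.of_forall fun y => (hfc y).aestronglyMeasurable) ((hfc x).intervalIntegrable a b)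
    (by fun_prop) (.of_forall fun t ht y hy => ?_)
    intervalIntegrable_const (.of_forall fun t _ y _ => hf y t)).2
  exact hC (y, t) ⟨hy, uIoc_subset_uIcc ht⟩

theorem continuous_intervalIntegral_between {X : Type*} [TopologicalSpace X]
    [FirstCountableTopology X] {f : X → ℝ → E} {u v : X → ℝ}
    (hf : Continuous ↿f) (hu : Continuous u) (hv : Continuous v) :
    Continuous fun x => ∫ t in u x..v x, f x t := by
  have hfx : ∀ x, Continuous (f x) := fun x => hf.comp (.prodMk_right x)
  have split_at_zero (x : X) :
      ∫ t in u x..v x, f x t = (∫ t in 0..v x, f x t) - ∫ t in 0..u x, f x t :=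
    (intervalIntegral.integral_interval_sub_left ((hfx x).intervalIntegrable 0 _)
      ((hfx x).intervalIntegrable 0 _)).symm
  simp only [split_at_zero]
  exact
    (intervalIntegral.continuous_parametric_intervalIntegral_of_continuous hf hv).sub
      (intervalIntegral.continuous_parametric_intervalIntegral_of_continuous hf hu)

open ContinuousLinearMap in
theorem hasStrictFDerivAt_parametric_primitive [CompleteSpace E] {f f' : ℝ → ℝ → E}
    (hf : ∀ x t, HasDerivAt (f · t) (f' x t) x) (hfc : Continuous ↿f)
    (hf'c : Continuous ↿f') (c : ℝ) (p : ℝ × ℝ) :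
    HasStrictFDerivAt (fun q : ℝ × ℝ => ∫ t in c..q.2, f q.1 t)
      ((toSpanSingleton ℝ (∫ t in c..p.2, f' p.1 t)).coprod (toSpanSingleton ℝ (f p.1 p.2))) p := by
  have hfx : ∀ x, Continuous (f x) := fun x => hfc.comp (.prodMk_right x)
  have hcont : Continuous fun q : ℝ × ℝ => ∫ t in c..q.2, f' q.1 t :=
    intervalIntegral.continuous_parametric_primitive_of_continuous hf'c
  exact hasStrictFDerivAt_uncurry_coprod (f := fun x y => ∫ t in c..y, f x t)
    (f₁ := fun x y => toSpanSingleton ℝ (∫ t in c..y, f' x t))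
    (f₂ := fun x y => toSpanSingleton ℝ (f x y))
    (.of_forall fun q =>
      (hasDerivAt_intervalIntegral_of_continuous_deriv hf hfx hf'c c q.2 q.1).hasFDerivAt)
    (.of_forall fun q => ((hfx q.1).integral_hasStrictDerivAt c q.2).hasDerivAt.hasFDerivAt)
    ((toSpanSingletonCLE (𝕜 := ℝ) (E := E)).continuous.comp hcont).continuousAt
    ((toSpanSingletonCLE (𝕜 := ℝ) (E := E)).continuous.comp hfc).continuousAt

theorem hasDerivAt_intervalIntegral_between [CompleteSpace E] {f f' : ℝ → ℝ → E}
    (hf : ∀ x t, HasDerivAt (f · t) (f' x t) x) (hfc : Continuous ↿f) (hf'c : Continuous ↿f')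
    {u v : ℝ → ℝ} {u' v' x : ℝ} (hu : HasDerivAt u u' x) (hv : HasDerivAt v v' x) :
    HasDerivAt (fun y => ∫ t in u y..v y, f y t)
      ((∫ t in u x..v x, f' x t) + (v' • f x (v x) - u' • f x (u x))) x := by
  have split_at_zero {g : ℝ → ℝ → E} (hg : Continuous ↿g) (y : ℝ) :
      ∫ t in u y..v y, g y t = (∫ t in 0..v y, g y t) - ∫ t in 0..u y, g y t := by
    have hgy : Continuous (g y) := hg.comp (.prodMk_right y)
    exact (intervalIntegral.integral_interval_sub_left (hgy.intervalIntegrable 0 _)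
      (hgy.intervalIntegrable 0 _)).symm
  have from_zero {w : ℝ → ℝ} {w' : ℝ} (hw : HasDerivAt w w' x) :
      HasDerivAt (fun y => ∫ t in 0..w y, f y t)
        ((∫ t in 0..w x, f' x t) + w' • f x (w x)) x := by
    simpa [Function.comp_def] using (hasStrictFDerivAt_parametric_primitive hf hfc hf'c 0
      (x, w x)).hasFDerivAt.comp_hasDerivAt x ((hasDerivAt_id x).prodMk hw)
  simp only [split_at_zero hfc, split_at_zero hf'c]
  refine ((from_zero hv).sub (from_zero hu)).congr_deriv ?_
  abel

end ParametricIntegral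

section Region

variable {α : Type*} [MeasurableSpace α] {μ : Measure α} {s : Set α} {u v : α → ℝ}
  {E : Type*} [NormedAddCommGroup E]

theorem setIntegral_regionBetween [SFinite μ] [NormedSpace ℝ E] (hs : MeasurableSet s)
    (hu : Measurable u) (hv : Measurable v) (huv : ∀ x ∈ s, u x ≤ v x) {g : α × ℝ → E}
    (hg : IntegrableOn g (regionBetween u v s) (μ.prod volume)) :
    ∫ p in regionBetween u v s, g p ∂(μ.prod volume) =
      ∫ x in s, (∫ z in u x..v x, g (x, z)) ∂μ := by
  have hR : MeasurableSet (regionBetween u v s) := measurableSet_regionBetween hu hv hs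
  rw [← integral_indicator hR, integral_prod _ ((integrable_indicator_iff hR).2 hg),
    ← integral_indicator hs]
  congr 1 with x
  by_cases hx : x ∈ s
  · have slice (z : ℝ) : (regionBetween u v s).indicator g (x, z) =
        (Ioo (u x) (v x)).indicator (fun z => g (x, z)) z := by
      simp [indicator, regionBetween, hx]
    simp only [slice, indicator_of_mem hx, integral_indicator measurableSet_Ioo,
      intervalIntegral.integral_of_le (huv x hx), integral_Ioc_eq_integral_Ioo]
  · simp [indicator, regionBetween, hx]

theorem integrableOn_regionBetween_of_continuous [TopologicalSpace α] [T2Space α]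
    [OpensMeasurableSpace α] [IsLocallyFiniteMeasure μ] {K : Set α} (hK : IsCompact K)
    (hsK : s ⊆ K)
    (hu : ContinuousOn u K) (hv : ContinuousOn v K) {g : α × ℝ → E} (hg : Continuous g) :
    IntegrableOn g (regionBetween u v s) (μ.prod volume) := by
  obtain ⟨m, hm⟩ := hK.bddBelow_image hu
  obtain ⟨M, hM⟩ := hK.bddAbove_image hv
  refine (hg.continuousOn.integrableOn_compact
    (hK.prod (isCompact_Icc (a := m) (b := M)))).mono_set ?_
  rintro ⟨x, z⟩ ⟨hx, hz⟩
  exact ⟨hsK hx, (hm (mem_image_of_mem u (hsK hx))).trans hz.1.le,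
    hz.2.le.trans (hM (mem_image_of_mem v (hsK hx)))⟩

theorem integrableOn_regionBetween_Ioo {u v : ℝ → ℝ} (hu : Continuous u) (hv : Continuous v)
    {g : ℝ × ℝ → E} (hg : Continuous g) (a b : ℝ) :
    IntegrableOn g (regionBetween u v (Ioo a b)) :=
  integrableOn_regionBetween_of_continuous isCompact_Icc Ioo_subset_Icc_self hu.continuousOn
    hv.continuousOn hg

theorem setIntegral_regionBetween_Ioo [NormedSpace ℝ E] {u v : ℝ → ℝ} {a b : ℝ} (hab : a ≤ b)
    (huv : ∀ x ∈ Ioo a b, u x ≤ v x) (hu : Continuous u) (hv : Continuous v) {g : ℝ × ℝ → E}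
    (hg : Continuous g) :
    ∫ p in regionBetween u v (Ioo a b), g p = ∫ x in a..b, ∫ z in u x..v x, g (x, z) := by
  rw [Measure.volume_eq_prod, setIntegral_regionBetween measurableSet_Ioo hu.measurable
      hv.measurable huv (integrableOn_regionBetween_Ioo hu hv hg a b),
    ← integral_Ioc_eq_integral_Ioo, ← intervalIntegral.integral_of_le hab]

end Region

section Divergence

variable {E : Type*} [NormedAddCommGroup E] [NormedSpace ℝ E]

theorem hasDerivAt_fst_slice {f : ℝ × ℝ → E} {x z : ℝ} (hf : DifferentiableAt ℝ f (x, z)) :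
    HasDerivAt (fun y => f (y, z)) (fderiv ℝ f (x, z) (1, 0)) x :=
  hf.hasFDerivAt.comp_hasDerivAt x ((hasDerivAt_id x).prodMk (hasDerivAt_const x z))

theorem hasDerivAt_snd_slice {f : ℝ × ℝ → E} {x z : ℝ} (hf : DifferentiableAt ℝ f (x, z)) :
    HasDerivAt (fun y => f (x, y)) (fderiv ℝ f (x, z) (0, 1)) z :=
  hf.hasFDerivAt.comp_hasDerivAt z ((hasDerivAt_const z x).prodMk (hasDerivAt_id z))

variable [CompleteSpace E] {u v : ℝ → ℝ}

theorem integral_fderiv_fst_between_graphs {F : ℝ × ℝ → E} (hF : ContDiff ℝ 1 F)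
    (hu : ContDiff ℝ 1 u) (hv : ContDiff ℝ 1 v) (a b : ℝ) :
    ∫ x in a..b, ∫ z in u x..v x, fderiv ℝ F (x, z) (1, 0) =
      (∫ z in u b..v b, F (b, z)) - (∫ z in u a..v a, F (a, z)) -
        ∫ x in a..b, (deriv v x • F (x, v x) - deriv u x • F (x, u x)) := by
  have hFc := hF.continuous
  have huc := hu.continuous
  have hvc := hv.continuous
  have : Continuous (deriv u) := hu.continuous_deriv le_rfl
  have : Continuous (deriv v) := hv.continuous_deriv le_rfl
  have : Continuous (fderiv ℝ F) := hF.continuous_fderiv one_ne_zero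
  have hinner : Continuous fun x => ∫ z in u x..v x, fderiv ℝ F (x, z) (1, 0) :=
    continuous_intervalIntegral_between (by fun_prop) huc hvc
  have hbdry : Continuous fun x => deriv v x • F (x, v x) - deriv u x • F (x, u x) := by
    fun_prop
  have leibniz (x : ℝ) : HasDerivAt (fun y => ∫ z in u y..v y, F (y, z))
      ((∫ z in u x..v x, fderiv ℝ F (x, z) (1, 0)) +
        (deriv v x • F (x, v x) - deriv u x • F (x, u x))) x :=
    hasDerivAt_intervalIntegral_between
      (fun x z => hasDerivAt_fst_slice (hF.differentiable one_ne_zero (x, z))) hFc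
      (by fun_prop) (hu.differentiable one_ne_zero x).hasDerivAt
      (hv.differentiable one_ne_zero x).hasDerivAt
  rw [eq_sub_iff_add_eq, ← intervalIntegral.integral_add (hinner.intervalIntegrable a b)
    (hbdry.intervalIntegrable a b)]
  exact intervalIntegral.integral_eq_sub_of_hasDerivAt (fun x _ => leibniz x)
    ((hinner.add hbdry).intervalIntegrable a b)

theorem integral_divergence_between_graphs {F G : ℝ × ℝ → E} (hF : ContDiff ℝ 1 F)
    (hG : ContDiff ℝ 1 G) (hu : ContDiff ℝ 1 u) (hv : ContDiff ℝ 1 v) (a b : ℝ) :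
    ∫ x in a..b, ∫ z in u x..v x, (fderiv ℝ F (x, z) (1, 0) + fderiv ℝ G (x, z) (0, 1)) =
      (∫ z in u b..v b, F (b, z)) - (∫ z in u a..v a, F (a, z)) +
        ∫ x in a..b, ((G (x, v x) - deriv v x • F (x, v x)) -
          (G (x, u x) - deriv u x • F (x, u x))) := by
  have hFc := hF.continuous
  have hGc := hG.continuous
  have huc := hu.continuous
  have hvc := hv.continuous
  have : Continuous (deriv u) := hu.continuous_deriv le_rfl
  have : Continuous (deriv v) := hv.continuous_deriv le_rfl
  have : Continuous (fderiv ℝ F) := hF.continuous_fderiv one_ne_zero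
  have : Continuous (fderiv ℝ G) := hG.continuous_fderiv one_ne_zero
  have hinner : Continuous fun x => ∫ z in u x..v x, fderiv ℝ F (x, z) (1, 0) :=
    continuous_intervalIntegral_between (by fun_prop) huc hvc
  have inner (x : ℝ) :
      ∫ z in u x..v x, (fderiv ℝ F (x, z) (1, 0) + fderiv ℝ G (x, z) (0, 1)) =
        (∫ z in u x..v x, fderiv ℝ F (x, z) (1, 0)) + (G (x, v x) - G (x, u x)) := by
    rw [intervalIntegral.integral_add (Continuous.intervalIntegrable (by fun_prop) _ _)
        (Continuous.intervalIntegrable (by fun_prop) _ _),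
      intervalIntegral.integral_eq_sub_of_hasDerivAt
        (fun z _ => hasDerivAt_snd_slice (hG.differentiable one_ne_zero (x, z)))
        (Continuous.intervalIntegrable (by fun_prop) _ _)]
  have flux : ∫ x in a..b, ((G (x, v x) - deriv v x • F (x, v x)) -
        (G (x, u x) - deriv u x • F (x, u x))) = (∫ x in a..b, (G (x, v x) - G (x, u x))) -
      ∫ x in a..b, (deriv v x • F (x, v x) - deriv u x • F (x, u x)) := by
    rw [← intervalIntegral.integral_sub (Continuous.intervalIntegrable (by fun_prop) _ _)
      (Continuous.intervalIntegrable (by fun_prop) _ _)]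
    simp only [sub_sub_sub_comm]
  simp only [inner]
  rw [intervalIntegral.integral_add (hinner.intervalIntegrable _ _)
      (Continuous.intervalIntegrable (by fun_prop) _ _),
    integral_fderiv_fst_between_graphs hF hu hv, flux]
  abel

end Divergence

section Korn

/-- The divergence `∂ₓf + ∂_z g` of the planar vector field `(f, g)`. -/
noncomputable def planarDiv (f g : ℝ × ℝ → ℝ) (p : ℝ × ℝ) : ℝ :=
  fderiv ℝ f p (1, 0) + fderiv ℝ g p (0, 1)

/-- The Jacobian determinant `∂ₓf ∂_z g - ∂_z f ∂ₓg` of the planar map `(f, g)`. -/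
noncomputable def planarJacobian (f g : ℝ × ℝ → ℝ) (p : ℝ × ℝ) : ℝ :=
  fderiv ℝ f p (1, 0) * fderiv ℝ g p (0, 1) - fderiv ℝ f p (0, 1) * fderiv ℝ g p (1, 0)

/-- The squared Frobenius norm `|∇v|²` of the gradient of the planar field `v = (f, g)`. -/
noncomputable def gradNormSq (f g : ℝ × ℝ → ℝ) (p : ℝ × ℝ) : ℝ :=
  fderiv ℝ f p (1, 0) ^ 2 + fderiv ℝ f p (0, 1) ^ 2 + fderiv ℝ g p (1, 0) ^ 2 +
    fderiv ℝ g p (0, 1) ^ 2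

/-- The squared Frobenius norm `|D(v)|²` of the symmetric gradient `D(v) = (∇v + (∇v)ᵀ)/2` of the
planar field `v = (f, g)`; its two equal off-diagonal entries account for the factor `2`. -/
noncomputable def symmGradNormSq (f g : ℝ × ℝ → ℝ) (p : ℝ × ℝ) : ℝ :=
  fderiv ℝ f p (1, 0) ^ 2 + fderiv ℝ g p (0, 1) ^ 2 +
    2 * ((fderiv ℝ f p (0, 1) + fderiv ℝ g p (1, 0)) / 2) ^ 2

theorem gradNormSq_add_planarDiv_sq (f g : ℝ × ℝ → ℝ) (p : ℝ × ℝ) :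
    gradNormSq f g p + planarDiv f g p ^ 2 =
      2 * symmGradNormSq f g p + 2 * planarJacobian f g p := by
  simp only [gradNormSq, planarDiv, symmGradNormSq, planarJacobian]
  ring

theorem fderiv_mul_fderiv_apply {f g : ℝ × ℝ → ℝ} (hf : ContDiff ℝ 1 f) (hg : ContDiff ℝ 2 g)
    (p v w : ℝ × ℝ) :
    fderiv ℝ (fun q => f q * fderiv ℝ g q w) p v =
      fderiv ℝ f p v * fderiv ℝ g p w + f p * fderiv ℝ (fderiv ℝ g) p v w := by
  have hf' := hf.differentiable one_ne_zero p
  have hg' := (hg.fderiv_right (m := 1) one_add_one_eq_two.le).differentiable one_ne_zero p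
  rw [fderiv_fun_mul hf' (by fun_prop), fderiv_clm_apply hg' (by fun_prop)]
  simp only [fderiv_fun_const, Pi.zero_apply, ContinuousLinearMap.comp_zero, zero_add, add_apply,
    smul_apply, ContinuousLinearMap.flip_apply, smul_eq_mul]
  ring

theorem planarJacobian_eq_fderiv_add_fderiv {f g : ℝ × ℝ → ℝ} (hf : ContDiff ℝ 1 f)
    (hg : ContDiff ℝ 2 g) (p : ℝ × ℝ) :
    planarJacobian f g p = fderiv ℝ (fun q => f q * fderiv ℝ g q (0, 1)) p (1, 0) +
      fderiv ℝ (fun q => -(f q * fderiv ℝ g q (1, 0))) p (0, 1) := by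
  have hsymm : fderiv ℝ (fderiv ℝ g) p (1, 0) (0, 1) = fderiv ℝ (fderiv ℝ g) p (0, 1) (1, 0) :=
    (hg.contDiffAt (x := p)).isSymmSndFDerivAt (by simp) _ _
  rw [fderiv_fun_neg, neg_apply, fderiv_mul_fderiv_apply hf hg,
    fderiv_mul_fderiv_apply hf hg, hsymm, planarJacobian]
  ring

theorem continuous_planarJacobian {f g : ℝ × ℝ → ℝ} (hf : ContDiff ℝ 1 f)
    (hg : ContDiff ℝ 1 g) : Continuous (planarJacobian f g) := by
  have : Continuous (fderiv ℝ f) := hf.continuous_fderiv one_ne_zero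
  have : Continuous (fderiv ℝ g) := hg.continuous_fderiv one_ne_zero
  unfold planarJacobian
  fun_prop

variable {f g : ℝ × ℝ → ℝ} {u v : ℝ → ℝ} {a b : ℝ}

theorem setIntegral_planarJacobian_regionBetween_eq_zero (hf : ContDiff ℝ 1 f)
    (hg : ContDiff ℝ 2 g) (hu : ContDiff ℝ 1 u) (hv : ContDiff ℝ 1 v) (hab : a ≤ b)
    (huv : ∀ x ∈ Ioo a b, u x ≤ v x) (hu_ends : u a = u b) (hv_ends : v a = v b)
    (hf_ends : ∀ z, f (a, z) = f (b, z)) (hg_ends : ∀ z, g (a, z) = g (b, z))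
    (hf_bot : ∀ x, f (x, u x) = 0) (hf_top : ∀ x, f (x, v x) = 0) :
    ∫ p in regionBetween u v (Ioo a b), planarJacobian f g p = 0 := by
  have : ContDiff ℝ 1 (fderiv ℝ g) := hg.fderiv_right one_add_one_eq_two.le
  have hg_diff : Differentiable ℝ g := hg.differentiable two_ne_zero
  have hDg_ends (z : ℝ) : fderiv ℝ g (a, z) (0, 1) = fderiv ℝ g (b, z) (0, 1) := by
    rw [← (hasDerivAt_snd_slice (hg_diff (a, z))).deriv,
      ← (hasDerivAt_snd_slice (hg_diff (b, z))).deriv, funext hg_ends]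
  rw [setIntegral_regionBetween_Ioo hab huv hu.continuous hv.continuous
    (continuous_planarJacobian hf (hg.of_le one_le_two))]
  simp only [planarJacobian_eq_fderiv_add_fderiv hf hg]
  rw [integral_divergence_between_graphs (by fun_prop) (by fun_prop) hu hv]
  simp [hf_bot, hf_top, hf_ends, hDg_ends, hu_ends, hv_ends]

theorem stmt_2_general (hf : ContDiff ℝ 1 f) (hg : ContDiff ℝ 2 g) (hu : ContDiff ℝ 1 u)
    (hv : ContDiff ℝ 1 v) (hab : a ≤ b) (huv : ∀ x ∈ Ioo a b, u x ≤ v x)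
    (hu_ends : u a = u b) (hv_ends : v a = v b)
    (hf_ends : ∀ z, f (a, z) = f (b, z)) (hg_ends : ∀ z, g (a, z) = g (b, z))
    (hf_bot : ∀ x, f (x, u x) = 0) (hf_top : ∀ x, f (x, v x) = 0) :
    (∫ p in regionBetween u v (Ioo a b), gradNormSq f g p) +
        ∫ p in regionBetween u v (Ioo a b), planarDiv f g p ^ 2 =
      2 * ∫ p in regionBetween u v (Ioo a b), symmGradNormSq f g p := by
  have : Continuous (fderiv ℝ f) := hf.continuous_fderiv one_ne_zero
  have : Continuous (fderiv ℝ g) := hg.continuous_fderiv two_ne_zero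
  have integrable {h : ℝ × ℝ → ℝ} (hh : Continuous h) :
      IntegrableOn h (regionBetween u v (Ioo a b)) :=
    integrableOn_regionBetween_Ioo hu.continuous hv.continuous hh a b
  have hjac := setIntegral_planarJacobian_regionBetween_eq_zero hf hg hu hv hab huv hu_ends
    hv_ends hf_ends hg_ends hf_bot hf_top
  rw [← integral_add (integrable (by unfold gradNormSq; fun_prop))
    (integrable (by unfold planarDiv; fun_prop))]
  simp only [gradNormSq_add_planarDiv_sq]
  rw [integral_add ((integrable (by unfold symmGradNormSq; fun_prop)).const_mul 2)
      ((integrable (continuous_planarJacobian hf (hg.of_le one_le_two))).const_mul 2),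
    integral_const_mul, integral_const_mul, hjac, mul_zero, add_zero]

end Korn

/-- Korn equality (2.3).
For a C¹, 1-periodic, positive height function `η` and a C² divergence-free velocity field
`v = (v₁, v₂)`, 1-periodic in `x`, vanishing on the bottom boundary and with purely vertical
trace on the top boundary `z = η x` (i.e. `v₁(x, η x) = 0`), one has
`∫_{Ω_η} |∇v|² = 2 ∫_{Ω_η} |D(v)|²`, where `D(v)` is the symmetric gradient and `|·|`
is the Frobenius norm. -/
theorem stmt_2 (η : ℝ → ℝ) (hη : ContDiff ℝ 1 η) (hper : ∀ x, η (x + 1) = η x)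
    (hpos : ∀ x, 0 < η x)
    (v1 v2 : ℝ × ℝ → ℝ) (hv1 : ContDiff ℝ 2 v1) (hv2 : ContDiff ℝ 2 v2)
    (hvper : ∀ x z, v1 (x + 1, z) = v1 (x, z) ∧ v2 (x + 1, z) = v2 (x, z))
    (hdiv : ∀ p : ℝ × ℝ, p.1 ∈ Ioo (0:ℝ) 1 → p.2 ∈ Ioo 0 (η p.1) →
      fderiv ℝ v1 p (1, 0) + fderiv ℝ v2 p (0, 1) = 0)
    (hbot : ∀ x, v1 (x, 0) = 0 ∧ v2 (x, 0) = 0)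
    (htop : ∀ x, v1 (x, η x) = 0) :
    (∫ p in {p : ℝ × ℝ | p.1 ∈ Ioo (0:ℝ) 1 ∧ p.2 ∈ Ioo 0 (η p.1)},
        ((fderiv ℝ v1 p (1, 0)) ^ 2 + (fderiv ℝ v1 p (0, 1)) ^ 2
          + (fderiv ℝ v2 p (1, 0)) ^ 2 + (fderiv ℝ v2 p (0, 1)) ^ 2))
      = 2 * ∫ p in {p : ℝ × ℝ | p.1 ∈ Ioo (0:ℝ) 1 ∧ p.2 ∈ Ioo 0 (η p.1)},
        ((fderiv ℝ v1 p (1, 0)) ^ 2 + (fderiv ℝ v2 p (0, 1)) ^ 2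
          + 2 * (((fderiv ℝ v1 p (0, 1) + fderiv ℝ v2 p (1, 0)) / 2) ^ 2)) := by
  have korn := stmt_2_general (hv1.of_le one_le_two) hv2 contDiff_const hη zero_le_one
    (fun x _ => (hpos x).le) rfl (by simpa using (hper 0).symm)
    (fun z => by simpa using (hvper 0 z).1.symm) (fun z => by simpa using (hvper 0 z).2.symm)
    (fun x => (hbot x).1) htop
  have hdiv_sq : ∫ p in regionBetween (fun _ => 0) η (Ioo 0 1), planarDiv v1 v2 p ^ 2 = 0 :=
    setIntegral_eq_zero_of_forall_eq_zero fun p hp => by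
      rw [planarDiv, hdiv p hp.1 hp.2, sq, mul_zero]
  rwa [hdiv_sq, add_zero] at korn
end

section
/- Let r ∈ [1,3], let ϱ̂, δ̂, β̂ > 0, let η₀ : ℝ → (0,∞) be a 1-periodic C⁴ function, and let C_f > 0, T > 0. Then there exist constants C > 0 and ε₀ ∈ (0,1] such that for every ε ∈ (0,ε₀] the following holds: if (v, p, η) is a classical solution of the FSI problem on the time interval [0, ε⁻²T] with coefficients ϱ = ϱ̂·ε, δ = δ̂·ε⁻ʳ, β = β̂·ε⁻¹, initial displacement ε·η₀, and force f with sup|f| ≤ C_f, then for every t ∈ (0, ε⁻²T): (1/2)·‖v(t)‖²_{L²(Ω_η(t))} + (1/2)·∫₀ᵗ ‖∇v‖²_{L²(Ω_η(s))} ds + (ϱ̂ε/2)·‖∂_tη(t)‖²_{L²(0,1)} + δ̂·ε⁻ʳ·∫₀ᵗ ‖∂_t∂ₓη(s)‖²_{L²(0,1)} ds + (β̂/(2ε))·‖∂ₓ²η(t)‖²_{L²(0,1)} ≤ C·ε. -/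
open MeasureTheory Set intervalIntegral

noncomputable section

/-- Partial derivative in the `x` direction of a field on `ℝ×ℝ×ℝ` (variables `(x,z,t)`). -/
def dX (f : ℝ × ℝ × ℝ → ℝ) (q : ℝ × ℝ × ℝ) : ℝ := fderiv ℝ f q (1, 0, 0)

/-- Partial derivative in the `z` direction. -/
def dZ (f : ℝ × ℝ × ℝ → ℝ) (q : ℝ × ℝ × ℝ) : ℝ := fderiv ℝ f q (0, 1, 0)

/-- Partial derivative in the `t` direction. -/
def dT (f : ℝ × ℝ × ℝ → ℝ) (q : ℝ × ℝ × ℝ) : ℝ := fderiv ℝ f q (0, 0, 1)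

/-- Partial derivative in `x` of a field on `ℝ×ℝ` (variables `(x,t)`). -/
def eX (f : ℝ × ℝ → ℝ) (q : ℝ × ℝ) : ℝ := fderiv ℝ f q (1, 0)

/-- Partial derivative in `t` of a field on `ℝ×ℝ` (variables `(x,t)`). -/
def eT (f : ℝ × ℝ → ℝ) (q : ℝ × ℝ) : ℝ := fderiv ℝ f q (0, 1)

/-- A classical solution `(v, p, η)` of the nonlinear FSI problem (1.2)–(1.5) on `[0,T]`
with coefficients `ϱ, δ, β`, force `f = (f1, f2)` and initial displacement `η0`:
all fields are smooth and 1-periodic in `x`; the incompressible Navier–Stokes equations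
(with Cauchy stress `σ(v,p) = 2D(v) − p·I`) hold on the moving subgraph domain
`Ω_η(t) = {0 < z < η(x,t)}`; the visco-elastic plate equation
`ϱ ∂ₜₜη − δ ∂ₓ²∂ₜη + β ∂ₓ⁴η = −(σ(v,p)(−∂ₓη,1)ᵀ)·e_z` (right side evaluated at
`(x, η(x,t), t)`) holds; the kinematic condition `v(x,η(x,t),t) = (0, ∂ₜη)` and the
no-slip condition `v(x,0,t) = 0` hold; and the initial conditions are
`v(·,0) = 0`, `∂ₜη(·,0) = 0`, `η(·,0) = η0 > 0`. -/
structure IsClassicalFSISolution (ϱ δ β T : ℝ)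
    (f1 f2 : ℝ × ℝ × ℝ → ℝ) (v1 v2 pr : ℝ × ℝ × ℝ → ℝ)
    (η : ℝ × ℝ → ℝ) (η0 : ℝ → ℝ) : Prop where
  smooth_v1 : ContDiff ℝ (⊤ : ℕ∞) v1
  smooth_v2 : ContDiff ℝ (⊤ : ℕ∞) v2
  smooth_pr : ContDiff ℝ (⊤ : ℕ∞) pr
  smooth_η : ContDiff ℝ (⊤ : ℕ∞) η
  periodic_v1 : ∀ x z t, v1 (x + 1, z, t) = v1 (x, z, t)
  periodic_v2 : ∀ x z t, v2 (x + 1, z, t) = v2 (x, z, t)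
  periodic_pr : ∀ x z t, pr (x + 1, z, t) = pr (x, z, t)
  periodic_η : ∀ x t, η (x + 1, t) = η (x, t)
  η_pos : ∀ x, ∀ t ∈ Icc (0:ℝ) T, 0 < η (x, t)
  momentum_1 : ∀ x z t, t ∈ Ioo (0:ℝ) T → z ∈ Ioo 0 (η (x, t)) →
    dT v1 (x, z, t) + v1 (x, z, t) * dX v1 (x, z, t) + v2 (x, z, t) * dZ v1 (x, z, t)
      - (dX (fun q => 2 * dX v1 q - pr q) (x, z, t)
          + dZ (fun q => dZ v1 q + dX v2 q) (x, z, t))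
      = f1 (x, z, t)
  momentum_2 : ∀ x z t, t ∈ Ioo (0:ℝ) T → z ∈ Ioo 0 (η (x, t)) →
    dT v2 (x, z, t) + v1 (x, z, t) * dX v2 (x, z, t) + v2 (x, z, t) * dZ v2 (x, z, t)
      - (dX (fun q => dZ v1 q + dX v2 q) (x, z, t)
          + dZ (fun q => 2 * dZ v2 q - pr q) (x, z, t))
      = f2 (x, z, t)
  incompressible : ∀ x z t, t ∈ Ioo (0:ℝ) T → z ∈ Ioo 0 (η (x, t)) →
    dX v1 (x, z, t) + dZ v2 (x, z, t) = 0
  plate : ∀ x : ℝ, ∀ t ∈ Ioo (0:ℝ) T,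
    ϱ * eT (eT η) (x, t) - δ * eX (eX (eT η)) (x, t)
        + β * eX (eX (eX (eX η))) (x, t)
      = -(((dZ v1 (x, η (x, t), t) + dX v2 (x, η (x, t), t)) * (-(eX η (x, t))))
          + (2 * dZ v2 (x, η (x, t), t) - pr (x, η (x, t), t)))
  kinematic_1 : ∀ x : ℝ, ∀ t ∈ Icc (0:ℝ) T, v1 (x, η (x, t), t) = 0
  kinematic_2 : ∀ x : ℝ, ∀ t ∈ Icc (0:ℝ) T, v2 (x, η (x, t), t) = eT η (x, t)
  noslip : ∀ x : ℝ, ∀ t ∈ Icc (0:ℝ) T, v1 (x, 0, t) = 0 ∧ v2 (x, 0, t) = 0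
  init_v : ∀ x z : ℝ, v1 (x, z, 0) = 0 ∧ v2 (x, z, 0) = 0
  init_ηt : ∀ x : ℝ, eT η (x, 0) = 0
  init_η : ∀ x : ℝ, η (x, 0) = η0 x
  init_η_pos : ∀ x : ℝ, 0 < η0 x

/-!
Since `div v = 0` in the fluid, `div σ = Δv - ∇p`, and the kinetic energy density `K = |v|² / 2`
satisfies `∂ₜK + div (v (K + p) - ∇K) = f · v - |∇v|²`. On the interface `v = (0, ∂ₜη)`, so the
tangential derivative of `v₁` vanishes; together with `div v = 0` this makes the flux through the
interface equal to the power transferred to the plate. Hence the energy of fluid plus plate changes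
at the rate `∫ f · v - ∫ |∇v|² - δ ∫ (∂ₜ∂ₓη)²`.

On a column of height `η`, Young's inequality weighted by `η²` and Poincaré's inequality (`v = 0`
at the bottom) bound the force term by `Cf² η³ / 2 + ∫ |∇v|² / 2`. The volume `V = ∫ η` is
conserved and `η² ≤ 2 (V² + ∫ (∂ₓ²η)²)`, so `∫ η³` is controlled *linearly* by the bending energy,
and Grönwall's lemma applies. For `V = O(ε)` and bending stiffness `β / ε` the Grönwall rate is
`O(ε²)`, which is exactly compensated by the time horizon `ε⁻² T`.
-/

section Calculus

open Filter Function Topology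

variable {E : Type*} [NormedAddCommGroup E] [NormedSpace ℝ E]

theorem hasDerivAt_integral_of_continuous {F F' : ℝ → ℝ → E} (hF : ∀ s, Continuous (F s))
    (hF' : Continuous (uncurry F')) (h : ∀ s y, HasDerivAt (F · y) (F' s y) s) (a b s : ℝ) :
    HasDerivAt (fun σ => ∫ y in a..b, F σ y) (∫ y in a..b, F' s y) s := by
  obtain ⟨C, hC⟩ := ((isCompact_Icc (a := s - 1) (b := s + 1)).prod
    (isCompact_uIcc (a := a) (b := b))).exists_bound_of_continuousOn hF'.continuousOn
  refine (hasDerivAt_integral_of_dominated_loc_of_deriv_le (bound := fun _ => C)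
    (Icc_mem_nhds (sub_one_lt s) (lt_add_one s))
    (Eventually.of_forall fun σ => (hF σ).aestronglyMeasurable)
    ((hF s).intervalIntegrable _ _) (hF'.uncurry_left s).aestronglyMeasurable
    (Eventually.of_forall fun y hy σ hσ => ?_) (by simp)
    (Eventually.of_forall fun y _ σ _ => h σ y)).2
  exact hC (σ, y) ⟨hσ, uIoc_subset_uIcc hy⟩

theorem hasDerivAt_integral_moving_endpoint [CompleteSpace E] {F F' : ℝ → ℝ → E}
    (hF : Continuous (uncurry F)) (hF' : Continuous (uncurry F'))
    (h : ∀ s y, HasDerivAt (F · y) (F' s y) s) {u : ℝ → ℝ} {u' s : ℝ} (hu : HasDerivAt u u' s)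
    (a : ℝ) :
    HasDerivAt (fun σ => ∫ y in a..u σ, F σ y) ((∫ y in a..u s, F' s y) + u' • F s (u s)) s := by
  have hpartial := hasStrictFDerivAt_uncurry_coprod (u := (s, u s))
    (f := fun σ b => ∫ y in a..b, F σ y)
    (f₁ := fun σ b => ContinuousLinearMap.toSpanSingleton ℝ (∫ y in a..b, F' σ y))
    (f₂ := fun σ b => ContinuousLinearMap.toSpanSingleton ℝ (F σ b))
    (Eventually.of_forall fun q => (hasDerivAt_integral_of_continuous
      (fun σ => hF.uncurry_left σ) hF' h a q.2 q.1).hasFDerivAt)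
    (Eventually.of_forall fun q =>
      ((hF.uncurry_left q.1).integral_hasStrictDerivAt a q.2).hasDerivAt.hasFDerivAt)
    (((ContinuousLinearMap.toSpanSingletonCLE (𝕜 := ℝ) (E := E)).continuous.comp
      (continuous_parametric_primitive_of_continuous hF')).continuousAt)
    (((ContinuousLinearMap.toSpanSingletonCLE (𝕜 := ℝ) (E := E)).continuous.comp hF).continuousAt)
  refine (hpartial.hasFDerivAt.comp_hasDerivAt s ((hasDerivAt_id s).prodMk hu)).congr_deriv ?_
  simp [HasUncurry.uncurry]

theorem le_mul_exp_of_hasDerivAt_le_mul {W W' : ℝ → ℝ} {a b B : ℝ} (hab : a ≤ b)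
    (hc : ContinuousOn W (Icc a b)) (hd : ∀ s ∈ Ioo a b, HasDerivAt W (W' s) s)
    (hle : ∀ s ∈ Ioo a b, W' s ≤ B * W s) :
    W b ≤ W a * Real.exp (B * (b - a)) := by
  have hderiv : ∀ s ∈ Ioo a b, HasDerivAt (fun s => W s * Real.exp (B * (b - s)))
      ((W' s - B * W s) * Real.exp (B * (b - s))) s := fun s hs =>
    ((hd s hs).mul (((hasDerivAt_id s).const_sub b).const_mul B).exp).congr_deriv (by simp; ring)
  have hanti : AntitoneOn (fun s => W s * Real.exp (B * (b - s))) (Icc a b) := by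
    refine antitoneOn_of_deriv_nonpos (convex_Icc a b) (by fun_prop) ?_ ?_ <;>
      rw [interior_Icc]
    · exact fun s hs => (hderiv s hs).differentiableAt.differentiableWithinAt
    · intro s hs
      rw [(hderiv s hs).deriv]
      exact mul_nonpos_of_nonpos_of_nonneg (sub_nonpos.2 (hle s hs)) (Real.exp_pos _).le
  simpa using hanti (left_mem_Icc.2 hab) (right_mem_Icc.2 hab) hab

variable {a b : ℝ}

theorem sq_integral_le_mul_integral_sq {f : ℝ → ℝ} (hab : a ≤ b)
    (hf : IntervalIntegrable f volume a b)
    (hf2 : IntervalIntegrable (fun x => f x ^ 2) volume a b) :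
    (∫ x in a..b, f x) ^ 2 ≤ (b - a) * ∫ x in a..b, f x ^ 2 := by
  obtain rfl | hlt := hab.eq_or_lt
  · simp
  set m := ∫ x in a..b, f x with hm
  have hsq : 0 ≤ ∫ x in a..b, ((b - a) * f x - m) ^ 2 :=
    integral_nonneg hab fun x _ => sq_nonneg _
  have hexpand : ∫ x in a..b, ((b - a) * f x - m) ^ 2
      = (b - a) * ((b - a) * (∫ x in a..b, f x ^ 2) - m ^ 2) := by
    have hpt : ∀ x, ((b - a) * f x - m) ^ 2
        = (b - a) ^ 2 * f x ^ 2 - 2 * (b - a) * m * f x + m ^ 2 := fun x => by ring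
    simp_rw [hpt]
    rw [integral_add ((hf2.const_mul _).sub (hf.const_mul _)) intervalIntegrable_const,
      integral_sub (hf2.const_mul _) (hf.const_mul _), intervalIntegral.integral_const_mul,
      intervalIntegral.integral_const_mul, intervalIntegral.integral_const, ← hm, smul_eq_mul]
    ring
  rw [hexpand] at hsq
  linarith [nonneg_of_mul_nonneg_right hsq (sub_pos.2 hlt)]

theorem sq_sub_le_mul_integral_sq_deriv {h h' : ℝ → ℝ}
    (hd : ∀ x ∈ Icc a b, HasDerivAt h (h' x) x) (hc : ContinuousOn h' (Icc a b))
    {x y : ℝ} (hx : x ∈ Icc a b) (hy : y ∈ Icc a b) :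
    (h x - h y) ^ 2 ≤ (b - a) * ∫ z in a..b, h' z ^ 2 := by
  wlog hyx : y ≤ x generalizing x y
  · rw [← neg_sub, neg_sq]
    exact this hy hx (le_of_not_ge hyx)
  have hsub : Icc y x ⊆ Icc a b := Icc_subset_Icc hy.1 hx.2
  have hint : IntervalIntegrable h' volume y x :=
    (hc.mono hsub).intervalIntegrable_of_Icc hyx
  have hmono : ∫ z in y..x, h' z ^ 2 ≤ ∫ z in a..b, h' z ^ 2 :=
    integral_mono_interval hy.1 hyx hx.2 (ae_of_all _ fun z => sq_nonneg (h' z))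
      ((hc.pow 2).intervalIntegrable_of_Icc (hy.1.trans hy.2))
  have hnonneg : 0 ≤ ∫ z in y..x, h' z ^ 2 := integral_nonneg hyx fun z _ => sq_nonneg (h' z)
  rw [← integral_eq_sub_of_hasDerivAt
    (fun z hz => hd z (hsub (by rwa [uIcc_of_le hyx] at hz))) hint]
  calc (∫ z in y..x, h' z) ^ 2
      ≤ (x - y) * ∫ z in y..x, h' z ^ 2 :=
        sq_integral_le_mul_integral_sq hyx hint
          (((hc.mono hsub).pow 2).intervalIntegrable_of_Icc hyx)
    _ ≤ (b - a) * ∫ z in a..b, h' z ^ 2 := by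
        gcongr
        exacts [sub_nonneg.2 (hy.1.trans hy.2), hx.2, hy.1]

theorem integral_sq_le_mul_integral_sq_deriv {h h' : ℝ → ℝ}
    (hd : ∀ x ∈ Icc a b, HasDerivAt h (h' x) x) (hc : ContinuousOn h' (Icc a b))
    {c : ℝ} (hcab : c ∈ Icc a b) (hzero : h c = 0) :
    ∫ x in a..b, h x ^ 2 ≤ (b - a) ^ 2 * ∫ x in a..b, h' x ^ 2 := by
  have hab : a ≤ b := hcab.1.trans hcab.2
  have hcont : ContinuousOn h (Icc a b) := fun x hx => (hd x hx).continuousAt.continuousWithinAt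
  calc ∫ x in a..b, h x ^ 2
      ≤ ∫ _ in a..b, (b - a) * ∫ z in a..b, h' z ^ 2 :=
        integral_mono_on hab ((hcont.pow 2).intervalIntegrable_of_Icc hab)
          intervalIntegrable_const fun x hx => by
            simpa [hzero] using sq_sub_le_mul_integral_sq_deriv hd hc hx hcab
    _ = (b - a) ^ 2 * ∫ x in a..b, h' x ^ 2 := by
        rw [intervalIntegral.integral_const, smul_eq_mul]
        ring

theorem sq_le_average_sq_add_integral_sq_deriv_deriv {h h' h'' : ℝ → ℝ} (hab : a < b)
    (hd : ∀ x ∈ Icc a b, HasDerivAt h (h' x) x) (hd' : ∀ x ∈ Icc a b, HasDerivAt h' (h'' x) x)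
    (hc : ContinuousOn h'' (Icc a b)) (heq : h a = h b) {x : ℝ} (hx : x ∈ Icc a b) :
    h x ^ 2 ≤ 2 * (⨍ y in a..b, h y) ^ 2 + 2 * ((b - a) ^ 3 * ∫ y in a..b, h'' y ^ 2) := by
  have hcont : ContinuousOn h (Icc a b) := fun x hx => (hd x hx).continuousAt.continuousWithinAt
  have hcont' : ContinuousOn h' (Icc a b) :=
    fun x hx => (hd' x hx).continuousAt.continuousWithinAt
  obtain ⟨c, hc_mem, hc_zero⟩ := exists_hasDerivAt_eq_zero hab hcont heq
    fun y hy => hd y (Ioo_subset_Icc_self hy)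
  obtain ⟨m, hm_mem, hm⟩ := exists_eq_interval_average (f := h) hab.ne
    (by rwa [uIcc_of_le hab.le])
  rw [uIoo_of_le hab.le] at hm_mem
  have hosc : (h x - h m) ^ 2 ≤ (b - a) ^ 3 * ∫ y in a..b, h'' y ^ 2 :=
    calc (h x - h m) ^ 2
        ≤ (b - a) * ∫ y in a..b, h' y ^ 2 :=
          sq_sub_le_mul_integral_sq_deriv hd hcont' hx (Ioo_subset_Icc_self hm_mem)
      _ ≤ (b - a) * ((b - a) ^ 2 * ∫ y in a..b, h'' y ^ 2) := by
          gcongr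
          · exact integral_sq_le_mul_integral_sq_deriv hd' hc (Ioo_subset_Icc_self hc_mem) hc_zero
      _ = (b - a) ^ 3 * ∫ y in a..b, h'' y ^ 2 := by ring
  rw [← hm]
  linarith [sq_nonneg (h x - 2 * h m)]

theorem setIntegral_regionBetween_s8 {s : Set ℝ} {f g : ℝ → ℝ} (hs : MeasurableSet s)
    (hf : Measurable f) (hg : Measurable g) (hfg : ∀ x ∈ s, f x ≤ g x) {φ : ℝ × ℝ → E}
    (hφ : IntegrableOn φ (regionBetween f g s)) :
    ∫ p in regionBetween f g s, φ p = ∫ x in s, ∫ z in f x..g x, φ (x, z) := by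
  have hR := measurableSet_regionBetween hf hg hs
  rw [← MeasureTheory.integral_indicator hR, Measure.volume_eq_prod,
    integral_prod _ (by rwa [← Measure.volume_eq_prod, integrable_indicator_iff hR]),
    ← MeasureTheory.integral_indicator hs]
  congr 1 with x
  by_cases hx : x ∈ s
  · rw [indicator_of_mem hx, integral_of_le (hfg x hx), integral_Ioc_eq_integral_Ioo,
      ← MeasureTheory.integral_indicator measurableSet_Ioo]
    congr 1 with z
    simp [indicator, regionBetween, hx]
  · simp [indicator, regionBetween, hx]

end Calculus
section DirectionalDerivatives

open Function
open scoped ContDiff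

variable {E F : Type*} [NormedAddCommGroup E] [NormedSpace ℝ E] [NormedAddCommGroup F]
  [NormedSpace ℝ F] {f : E → F}

@[fun_prop]
theorem differentiable_of_contDiff_infty (hf : ContDiff ℝ ∞ f) : Differentiable ℝ f :=
  hf.differentiable (by simp)

theorem contDiff_fderiv_apply_const {m n : WithTop ℕ∞} (hf : ContDiff ℝ n f) (hmn : m + 1 ≤ n)
    (u : E) : ContDiff ℝ m fun q => fderiv ℝ f q u :=
  (hf.fderiv_right hmn).clm_apply contDiff_const

theorem fderiv_fderiv_apply_comm {q : E} (hf : ContDiffAt ℝ 2 f q) (u w : E) :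
    fderiv ℝ (fun p => fderiv ℝ f p u) q w = fderiv ℝ (fun p => fderiv ℝ f p w) q u := by
  have hdiff : DifferentiableAt ℝ (fderiv ℝ f) q :=
    (hf.fderiv_right (m := 1) (by norm_num)).differentiableAt one_ne_zero
  rw [fderiv_clm_apply hdiff (by fun_prop), fderiv_clm_apply hdiff (by fun_prop)]
  simpa using hf.isSymmSndFDerivAt (by simp) w u

theorem periodic_fderiv_apply {c : E} (hf : Periodic f c) (u : E) :
    Periodic (fun q => fderiv ℝ f q u) c := fun q => by
  simp only [← fderiv_comp_add_right, hf.funext]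

end DirectionalDerivatives

section PartialDerivatives

open Function
open scoped ContDiff

variable {f : ℝ × ℝ × ℝ → ℝ} {g : ℝ × ℝ → ℝ}

@[fun_prop]
theorem contDiff_dX (hf : ContDiff ℝ ∞ f) : ContDiff ℝ ∞ (dX f) :=
  contDiff_fderiv_apply_const hf (by simp) _

@[fun_prop]
theorem contDiff_dZ (hf : ContDiff ℝ ∞ f) : ContDiff ℝ ∞ (dZ f) :=
  contDiff_fderiv_apply_const hf (by simp) _

@[fun_prop]
theorem contDiff_dT (hf : ContDiff ℝ ∞ f) : ContDiff ℝ ∞ (dT f) :=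
  contDiff_fderiv_apply_const hf (by simp) _

@[fun_prop]
theorem contDiff_eX (hg : ContDiff ℝ ∞ g) : ContDiff ℝ ∞ (eX g) :=
  contDiff_fderiv_apply_const hg (by simp) _

@[fun_prop]
theorem contDiff_eT (hg : ContDiff ℝ ∞ g) : ContDiff ℝ ∞ (eT g) :=
  contDiff_fderiv_apply_const hg (by simp) _

theorem continuous_dX (hf : ContDiff ℝ 1 f) : Continuous (dX f) :=
  (contDiff_fderiv_apply_const (m := 0) hf (by simp) _).continuous

theorem continuous_dZ (hf : ContDiff ℝ 1 f) : Continuous (dZ f) :=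
  (contDiff_fderiv_apply_const (m := 0) hf (by simp) _).continuous

theorem continuous_dT (hf : ContDiff ℝ 1 f) : Continuous (dT f) :=
  (contDiff_fderiv_apply_const (m := 0) hf (by simp) _).continuous

theorem continuous_eX (hg : ContDiff ℝ 1 g) : Continuous (eX g) :=
  (contDiff_fderiv_apply_const (m := 0) hg (by simp) _).continuous

theorem continuous_eT (hg : ContDiff ℝ 1 g) : Continuous (eT g) :=
  (contDiff_fderiv_apply_const (m := 0) hg (by simp) _).continuous

theorem hasDerivAt_dX (hf : Differentiable ℝ f) (x z t : ℝ) :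
    HasDerivAt (fun s => f (s, z, t)) (dX f (x, z, t)) x :=
  (hf (x, z, t)).hasFDerivAt.comp_hasDerivAt x
    ((hasDerivAt_id x).prodMk (hasDerivAt_const x (z, t)))

theorem hasDerivAt_dZ (hf : Differentiable ℝ f) (x z t : ℝ) :
    HasDerivAt (fun s => f (x, s, t)) (dZ f (x, z, t)) z :=
  (hf (x, z, t)).hasFDerivAt.comp_hasDerivAt z
    ((hasDerivAt_const z x).prodMk ((hasDerivAt_id z).prodMk (hasDerivAt_const z t)))

theorem hasDerivAt_dT (hf : Differentiable ℝ f) (x z t : ℝ) :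
    HasDerivAt (fun s => f (x, z, s)) (dT f (x, z, t)) t :=
  (hf (x, z, t)).hasFDerivAt.comp_hasDerivAt t
    ((hasDerivAt_const t x).prodMk ((hasDerivAt_const t z).prodMk (hasDerivAt_id t)))

theorem hasDerivAt_eX (hg : Differentiable ℝ g) (x t : ℝ) :
    HasDerivAt (fun s => g (s, t)) (eX g (x, t)) x :=
  (hg (x, t)).hasFDerivAt.comp_hasDerivAt x ((hasDerivAt_id x).prodMk (hasDerivAt_const x t))

theorem hasDerivAt_eT (hg : Differentiable ℝ g) (x t : ℝ) :
    HasDerivAt (fun s => g (x, s)) (eT g (x, t)) t :=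
  (hg (x, t)).hasFDerivAt.comp_hasDerivAt t ((hasDerivAt_const t x).prodMk (hasDerivAt_id t))

theorem dX_dZ_comm (hf : ContDiff ℝ 2 f) : dX (dZ f) = dZ (dX f) :=
  funext fun _ => fderiv_fderiv_apply_comm hf.contDiffAt _ _

theorem eX_eT_comm (hg : ContDiff ℝ 2 g) : eX (eT g) = eT (eX g) :=
  funext fun _ => fderiv_fderiv_apply_comm hg.contDiffAt _ _

theorem periodic_eX {c : ℝ × ℝ} (hg : Periodic g c) : Periodic (eX g) c :=
  periodic_fderiv_apply hg _

theorem periodic_eT {c : ℝ × ℝ} (hg : Periodic g c) : Periodic (eT g) c :=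
  periodic_fderiv_apply hg _

end PartialDerivatives

section SubgraphIntegrals

open Function

/-- The integral of `g` over the vertical column of height `η (x, t)` above the point `x` at
time `t`, as a function of `(x, t)`. -/
def columnIntegral (η : ℝ × ℝ → ℝ) (g : ℝ × ℝ × ℝ → ℝ) (q : ℝ × ℝ) : ℝ :=
  ∫ z in (0 : ℝ)..η q, g (q.1, z, q.2)

/-- The integral of `g (·, ·, t)` over the subgraph `Ω_η(t)`, as an iterated integral. -/
def subgraphIntegral (η : ℝ × ℝ → ℝ) (g : ℝ × ℝ × ℝ → ℝ) (t : ℝ) : ℝ :=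
  ∫ x in (0 : ℝ)..1, columnIntegral η g (x, t)

variable {η : ℝ × ℝ → ℝ} {g h : ℝ × ℝ × ℝ → ℝ}

@[fun_prop]
theorem continuous_columnIntegral (hη : Continuous η) (hg : Continuous g) :
    Continuous (columnIntegral η g) :=
  continuous_parametric_intervalIntegral_of_continuous
    (f := fun (q : ℝ × ℝ) z => g (q.1, z, q.2)) (by fun_prop) hη

@[fun_prop]
theorem continuous_subgraphIntegral (hη : Continuous η) (hg : Continuous g) :
    Continuous (subgraphIntegral η g) := by
  unfold subgraphIntegral
  fun_prop

theorem columnIntegral_add (hg : Continuous g) (hh : Continuous h) (q : ℝ × ℝ) :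
    columnIntegral η (fun p => g p + h p) q = columnIntegral η g q + columnIntegral η h q :=
  integral_add (Continuous.intervalIntegrable (by fun_prop) _ _)
    (Continuous.intervalIntegrable (by fun_prop) _ _)

theorem columnIntegral_const_mul (c : ℝ) (q : ℝ × ℝ) :
    columnIntegral η (fun p => c * g p) q = c * columnIntegral η g q :=
  intervalIntegral.integral_const_mul c _

theorem columnIntegral_mono {x t : ℝ} (hη : 0 ≤ η (x, t)) (hg : Continuous g) (hh : Continuous h)
    (hgh : ∀ z ∈ Ioo 0 (η (x, t)), g (x, z, t) ≤ h (x, z, t)) :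
    columnIntegral η g (x, t) ≤ columnIntegral η h (x, t) :=
  integral_mono_on_of_le_Ioo hη (Continuous.intervalIntegrable (by fun_prop) _ _)
    (Continuous.intervalIntegrable (by fun_prop) _ _) fun z hz => hgh z hz

theorem columnIntegral_congr {x t : ℝ} (hη : 0 ≤ η (x, t))
    (hgh : ∀ z ∈ Ioo 0 (η (x, t)), g (x, z, t) = h (x, z, t)) :
    columnIntegral η g (x, t) = columnIntegral η h (x, t) :=
  integral_congr_Ioo_of_le hη fun z hz => hgh z hz

theorem hasDerivAt_columnIntegral_fst (hη : Differentiable ℝ η) (hg : ContDiff ℝ 1 g) (x t : ℝ) :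
    HasDerivAt (fun s => columnIntegral η g (s, t))
      (columnIntegral η (dX g) (x, t) + eX η (x, t) * g (x, η (x, t), t)) x := by
  have hdX := continuous_dX hg
  exact hasDerivAt_integral_moving_endpoint (F := fun s z => g (s, z, t)) (by fun_prop)
    (by fun_prop) (fun s z => hasDerivAt_dX (hg.differentiable one_ne_zero) s z t)
    (hasDerivAt_eX hη x t) 0

theorem hasDerivAt_columnIntegral_snd (hη : Differentiable ℝ η) (hg : ContDiff ℝ 1 g) (x t : ℝ) :
    HasDerivAt (fun s => columnIntegral η g (x, s))
      (columnIntegral η (dT g) (x, t) + eT η (x, t) * g (x, η (x, t), t)) t := by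
  have hdT := continuous_dT hg
  exact hasDerivAt_integral_moving_endpoint (F := fun s z => g (x, z, s)) (by fun_prop)
    (by fun_prop) (fun s z => hasDerivAt_dT (hg.differentiable one_ne_zero) x z s)
    (hasDerivAt_eT hη x t) 0

theorem columnIntegral_dZ (hg : ContDiff ℝ 1 g) (x t : ℝ) :
    columnIntegral η (dZ g) (x, t) = g (x, η (x, t), t) - g (x, 0, t) := by
  have hdZ := continuous_dZ hg
  exact integral_eq_sub_of_hasDerivAt
    (fun z _ => hasDerivAt_dZ (hg.differentiable one_ne_zero) x z t)
    (Continuous.intervalIntegrable (by fun_prop) _ _)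

theorem integral_columnIntegral_dX_add (hη : ContDiff ℝ 1 η) (hηp : Periodic η (1, 0))
    (hg : ContDiff ℝ 1 g) (hgp : Periodic g (1, 0, 0)) (t : ℝ) :
    ∫ x in (0 : ℝ)..1,
      (columnIntegral η (dX g) (x, t) + eX η (x, t) * g (x, η (x, t), t)) = 0 := by
  have hdX := continuous_dX hg
  have heX := continuous_eX hη
  rw [integral_eq_sub_of_hasDerivAt
    (fun x _ => hasDerivAt_columnIntegral_fst (hη.differentiable one_ne_zero) hg x t)
    (Continuous.intervalIntegrable (by fun_prop) _ _), sub_eq_zero]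
  have hη1 : η (1, t) = η (0, t) := by simpa using hηp (0, t)
  have hg1 : ∀ z, g (1, z, t) = g (0, z, t) := fun z => by simpa using hgp (0, z, t)
  simp only [columnIntegral, hη1, hg1]

theorem hasDerivAt_subgraphIntegral (hη : ContDiff ℝ 1 η) (hg : ContDiff ℝ 1 g) (t : ℝ) :
    HasDerivAt (subgraphIntegral η g)
      (∫ x in (0 : ℝ)..1,
        (columnIntegral η (dT g) (x, t) + eT η (x, t) * g (x, η (x, t), t))) t := by
  have hdT := continuous_dT hg
  have heT := continuous_eT hη
  exact hasDerivAt_integral_of_continuous (F := fun s x => columnIntegral η g (x, s))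
    (F' := fun s x => columnIntegral η (dT g) (x, s) + eT η (x, s) * g (x, η (x, s), s))
    (fun s => by fun_prop) (by fun_prop)
    (fun s x => hasDerivAt_columnIntegral_snd (hη.differentiable one_ne_zero) hg x s) 0 1 t

theorem hasDerivAt_subgraphIntegral_eq_divergence_add_flux {h₀ h₁ h₂ : ℝ × ℝ × ℝ → ℝ}
    (hη : ContDiff ℝ 1 η) (hηp : Periodic η (1, 0)) (hh₀ : ContDiff ℝ 1 h₀)
    (hh₁ : ContDiff ℝ 1 h₁) (hh₁p : Periodic h₁ (1, 0, 0)) (hh₂ : ContDiff ℝ 1 h₂) (t : ℝ) :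
    HasDerivAt (subgraphIntegral η h₀)
      (subgraphIntegral η (fun q => dT h₀ q + dX h₁ q + dZ h₂ q) t
        + ∫ x in (0 : ℝ)..1, (eT η (x, t) * h₀ (x, η (x, t), t)
          + eX η (x, t) * h₁ (x, η (x, t), t) - h₂ (x, η (x, t), t) + h₂ (x, 0, t))) t := by
  have hdT := continuous_dT hh₀
  have hdX := continuous_dX hh₁
  have hdZ := continuous_dZ hh₂
  have heT := continuous_eT hη
  have heX := continuous_eX hη
  refine (hasDerivAt_subgraphIntegral hη hh₀ t).congr_deriv
    ((add_eq_left.2 (integral_columnIntegral_dX_add hη hηp hh₁ hh₁p t)).symm.trans ?_)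
  rw [subgraphIntegral, ← integral_add (Continuous.intervalIntegrable (by fun_prop) _ _)
      (Continuous.intervalIntegrable (by fun_prop) _ _),
    ← integral_add (Continuous.intervalIntegrable (by fun_prop) _ _)
      (Continuous.intervalIntegrable (by fun_prop) _ _)]
  congr 1 with x
  rw [columnIntegral_add (by fun_prop) hdZ, columnIntegral_add hdT hdX, columnIntegral_dZ hh₂]
  ring

theorem setIntegral_subgraph (hη : Continuous η) (hg : Continuous g) {t : ℝ}
    (hpos : ∀ x, 0 ≤ η (x, t)) :
    ∫ p in {p : ℝ × ℝ | p.1 ∈ Ioo (0 : ℝ) 1 ∧ p.2 ∈ Ioo 0 (η (p.1, t))}, g (p.1, p.2, t)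
      = subgraphIntegral η g t := by
  obtain ⟨M, hM⟩ := isCompact_Icc.exists_bound_of_continuousOn
    (s := Icc (0 : ℝ) 1) (f := fun x => η (x, t)) (by fun_prop)
  have hsub : regionBetween 0 (fun x => η (x, t)) (Ioo 0 1) ⊆ Icc (0 : ℝ) 1 ×ˢ Icc 0 M :=
    fun p hp => ⟨Ioo_subset_Icc_self hp.1, hp.2.1.le,
      hp.2.2.le.trans ((le_abs_self _).trans (hM p.1 (Ioo_subset_Icc_self hp.1)))⟩
  have hint : IntegrableOn (fun p : ℝ × ℝ => g (p.1, p.2, t))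
      (regionBetween 0 (fun x => η (x, t)) (Ioo 0 1)) :=
    (ContinuousOn.integrableOn_compact (isCompact_Icc.prod isCompact_Icc) (by fun_prop)).mono_set
      hsub
  rw [subgraphIntegral, integral_of_le zero_le_one, integral_Ioc_eq_integral_Ioo]
  exact setIntegral_regionBetween_s8 measurableSet_Ioo measurable_const
    (Continuous.measurable (by fun_prop)) (fun x _ => hpos x) hint

end SubgraphIntegrals

section PlateEnergy

open Function
open scoped ContDiff

/-- The kinetic plus bending energy of the plate at time `t`. -/
def plateEnergy (ϱ β : ℝ) (η : ℝ × ℝ → ℝ) (t : ℝ) : ℝ :=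
  ϱ / 2 * (∫ x in (0 : ℝ)..1, eT η (x, t) ^ 2) + β / 2 * ∫ x in (0 : ℝ)..1, eX (eX η) (x, t) ^ 2

theorem integral_mul_eX_eq_neg {a b : ℝ × ℝ → ℝ} (ha : ContDiff ℝ 1 a) (hap : Periodic a (1, 0))
    (hb : ContDiff ℝ 1 b) (hbp : Periodic b (1, 0)) (t : ℝ) :
    ∫ x in (0 : ℝ)..1, a (x, t) * eX b (x, t) = -∫ x in (0 : ℝ)..1, eX a (x, t) * b (x, t) := by
  have heXa := continuous_eX ha
  have heXb := continuous_eX hb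
  rw [integral_mul_deriv_eq_deriv_mul
    (fun x _ => hasDerivAt_eX (ha.differentiable one_ne_zero) x t)
    (fun x _ => hasDerivAt_eX (hb.differentiable one_ne_zero) x t)
    (Continuous.intervalIntegrable (by fun_prop) _ _)
    (Continuous.intervalIntegrable (by fun_prop) _ _)]
  have ha1 : a (1, t) = a (0, t) := by simpa using hap (0, t)
  have hb1 : b (1, t) = b (0, t) := by simpa using hbp (0, t)
  rw [ha1, hb1, sub_self, zero_sub]

theorem hasDerivAt_integral_sq {a : ℝ × ℝ → ℝ} (ha : ContDiff ℝ 1 a) (t : ℝ) :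
    HasDerivAt (fun s => ∫ x in (0 : ℝ)..1, a (x, s) ^ 2)
      (∫ x in (0 : ℝ)..1, 2 * a (x, t) * eT a (x, t)) t := by
  have heT := continuous_eT ha
  exact hasDerivAt_integral_of_continuous (F := fun s x => a (x, s) ^ 2)
    (F' := fun s x => 2 * a (x, s) * eT a (x, s)) (by fun_prop) (by fun_prop)
    (fun s x => ((hasDerivAt_eT (ha.differentiable one_ne_zero) x s).fun_pow 2).congr_deriv
      (by simp)) 0 1 t

variable {η : ℝ × ℝ → ℝ}

theorem integral_eT_mul_eX_eX_eT (hη : ContDiff ℝ ∞ η) (hηp : Periodic η (1, 0)) (t : ℝ) :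
    ∫ x in (0 : ℝ)..1, eT η (x, t) * eX (eX (eT η)) (x, t)
      = -∫ x in (0 : ℝ)..1, eT (eX η) (x, t) ^ 2 := by
  have hηt : ContDiff ℝ 1 (eT η) := by fun_prop (disch := simp)
  have hηxt : ContDiff ℝ 1 (eX (eT η)) := by fun_prop (disch := simp)
  have hηtp := periodic_eT hηp
  rw [integral_mul_eX_eq_neg hηt hηtp hηxt (periodic_eX hηtp), eX_eT_comm (contDiff_infty.1 hη 2)]
  simp only [sq]

theorem integral_eT_mul_eX_eX_eX_eX (hη : ContDiff ℝ ∞ η) (hηp : Periodic η (1, 0)) (t : ℝ) :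
    ∫ x in (0 : ℝ)..1, eT η (x, t) * eX (eX (eX (eX η))) (x, t)
      = ∫ x in (0 : ℝ)..1, eX (eX η) (x, t) * eT (eX (eX η)) (x, t) := by
  have hηt : ContDiff ℝ 1 (eT η) := by fun_prop (disch := simp)
  have hηxt : ContDiff ℝ 1 (eX (eT η)) := by fun_prop (disch := simp)
  have hηxx : ContDiff ℝ 1 (eX (eX η)) := by fun_prop (disch := simp)
  have hηxxx : ContDiff ℝ 1 (eX (eX (eX η))) := by fun_prop (disch := simp)
  have hηtp := periodic_eT hηp
  have hηxxp := periodic_eX (periodic_eX hηp)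
  rw [integral_mul_eX_eq_neg hηt hηtp hηxxx (periodic_eX hηxxp),
    integral_mul_eX_eq_neg hηxt (periodic_eX hηtp) hηxx hηxxp, neg_neg,
    eX_eT_comm (contDiff_infty.1 hη 2), eX_eT_comm (contDiff_infty.1 (contDiff_eX hη) 2)]
  simp only [mul_comm]

theorem hasDerivAt_plateEnergy (hη : ContDiff ℝ ∞ η) (hηp : Periodic η (1, 0)) (ϱ δ β t : ℝ) :
    HasDerivAt (plateEnergy ϱ β η)
      ((∫ x in (0 : ℝ)..1, eT η (x, t) * (ϱ * eT (eT η) (x, t) - δ * eX (eX (eT η)) (x, t)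
          + β * eX (eX (eX (eX η))) (x, t)))
        - δ * ∫ x in (0 : ℝ)..1, eT (eX η) (x, t) ^ 2) t := by
  have hηt : ContDiff ℝ 1 (eT η) := by fun_prop (disch := simp)
  have hηxx : ContDiff ℝ 1 (eX (eX η)) := by fun_prop (disch := simp)
  refine (((hasDerivAt_integral_sq hηt t).const_mul (ϱ / 2)).add
    ((hasDerivAt_integral_sq hηxx t).const_mul (β / 2))).congr_deriv ?_
  have hsplit : ∫ x in (0 : ℝ)..1, eT η (x, t) * (ϱ * eT (eT η) (x, t)
        - δ * eX (eX (eT η)) (x, t) + β * eX (eX (eX (eX η))) (x, t))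
      = ϱ * (∫ x in (0 : ℝ)..1, eT η (x, t) * eT (eT η) (x, t))
        - δ * (∫ x in (0 : ℝ)..1, eT η (x, t) * eX (eX (eT η)) (x, t))
        + β * ∫ x in (0 : ℝ)..1, eT η (x, t) * eX (eX (eX (eX η))) (x, t) := by
    simp only [← intervalIntegral.integral_const_mul]
    rw [← integral_sub (Continuous.intervalIntegrable (by fun_prop) _ _)
        (Continuous.intervalIntegrable (by fun_prop) _ _),
      ← integral_add (Continuous.intervalIntegrable (by fun_prop) _ _)
        (Continuous.intervalIntegrable (by fun_prop) _ _)]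
    congr 1 with x
    ring
  rw [hsplit, integral_eT_mul_eX_eX_eT hη hηp, integral_eT_mul_eX_eX_eX_eX hη hηp]
  simp only [mul_assoc, intervalIntegral.integral_const_mul]
  ring

end PlateEnergy

section EnergyDensities

open Function
open scoped ContDiff

/-- The kinetic energy density `|v|² / 2`. -/
def kineticDensity (v1 v2 : ℝ × ℝ × ℝ → ℝ) (q : ℝ × ℝ × ℝ) : ℝ :=
  1 / 2 * (v1 q ^ 2 + v2 q ^ 2)

/-- The squared norm `|∇v|²` of the spatial velocity gradient. -/
def gradSq (v1 v2 : ℝ × ℝ × ℝ → ℝ) (q : ℝ × ℝ × ℝ) : ℝ :=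
  dX v1 q ^ 2 + dZ v1 q ^ 2 + dX v2 q ^ 2 + dZ v2 q ^ 2

/-- The energy flux `w (|v|² / 2 + p) - ∂ᵤ(|v|² / 2)` in the direction `u`, where `w` is the
component of the velocity in that direction. -/
def energyFlux (v1 v2 pr w : ℝ × ℝ × ℝ → ℝ) (u q : ℝ × ℝ × ℝ) : ℝ :=
  w q * (kineticDensity v1 v2 q + pr q) - fderiv ℝ (kineticDensity v1 v2) q u

/-- The space-time divergence of the kinetic energy density and its flux. -/
def energyDivergence (v1 v2 pr : ℝ × ℝ × ℝ → ℝ) (q : ℝ × ℝ × ℝ) : ℝ :=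
  dT (kineticDensity v1 v2) q + dX (energyFlux v1 v2 pr v1 (1, 0, 0)) q
    + dZ (energyFlux v1 v2 pr v2 (0, 1, 0)) q

variable {v1 v2 pr w : ℝ × ℝ × ℝ → ℝ}

theorem kineticDensity_nonneg (q : ℝ × ℝ × ℝ) : 0 ≤ kineticDensity v1 v2 q := by
  unfold kineticDensity
  positivity

theorem gradSq_nonneg (q : ℝ × ℝ × ℝ) : 0 ≤ gradSq v1 v2 q := by
  unfold gradSq
  positivity

@[fun_prop]
theorem contDiff_kineticDensity (h1 : ContDiff ℝ ∞ v1) (h2 : ContDiff ℝ ∞ v2) :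
    ContDiff ℝ ∞ (kineticDensity v1 v2) := by
  unfold kineticDensity
  fun_prop

@[fun_prop]
theorem contDiff_gradSq (h1 : ContDiff ℝ ∞ v1) (h2 : ContDiff ℝ ∞ v2) :
    ContDiff ℝ ∞ (gradSq v1 v2) := by
  unfold gradSq
  fun_prop

@[fun_prop]
theorem contDiff_energyFlux (h1 : ContDiff ℝ ∞ v1) (h2 : ContDiff ℝ ∞ v2)
    (hpr : ContDiff ℝ ∞ pr) (hw : ContDiff ℝ ∞ w) (u : ℝ × ℝ × ℝ) :
    ContDiff ℝ ∞ (energyFlux v1 v2 pr w u) :=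
  (hw.mul ((contDiff_kineticDensity h1 h2).add hpr)).sub
    (contDiff_fderiv_apply_const (contDiff_kineticDensity h1 h2) (by simp) u)

@[fun_prop]
theorem contDiff_energyDivergence (h1 : ContDiff ℝ ∞ v1) (h2 : ContDiff ℝ ∞ v2)
    (hpr : ContDiff ℝ ∞ pr) : ContDiff ℝ ∞ (energyDivergence v1 v2 pr) := by
  unfold energyDivergence
  fun_prop

theorem periodic_energyFlux {c : ℝ × ℝ × ℝ} (h1 : Periodic v1 c) (h2 : Periodic v2 c)
    (hpr : Periodic pr c) (hw : Periodic w c) (u : ℝ × ℝ × ℝ) :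
    Periodic (energyFlux v1 v2 pr w u) c := by
  have hK : Periodic (kineticDensity v1 v2) c := fun q => by simp only [kineticDensity, h1 q, h2 q]
  exact fun q => by simp only [energyFlux, hw q, hK q, hpr q, periodic_fderiv_apply hK u q]

theorem fderiv_kineticDensity (h1 : Differentiable ℝ v1) (h2 : Differentiable ℝ v2)
    (u q : ℝ × ℝ × ℝ) :
    fderiv ℝ (kineticDensity v1 v2) q u = v1 q * fderiv ℝ v1 q u + v2 q * fderiv ℝ v2 q u := by
  unfold kineticDensity
  rw [fderiv_const_mul (by fun_prop), fderiv_fun_add (by fun_prop) (by fun_prop),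
    fderiv_fun_pow 2 (h1 q), fderiv_fun_pow 2 (h2 q)]
  simp only [smul_apply, add_apply, smul_eq_mul, nsmul_eq_mul]
  push_cast
  ring

theorem fderiv_energyFlux (h1 : ContDiff ℝ ∞ v1) (h2 : ContDiff ℝ ∞ v2)
    (hpr : ContDiff ℝ ∞ pr) (hw : ContDiff ℝ ∞ w) (u q : ℝ × ℝ × ℝ) :
    fderiv ℝ (energyFlux v1 v2 pr w u) q u
      = fderiv ℝ w q u * (kineticDensity v1 v2 q + pr q)
        + w q * (v1 q * fderiv ℝ v1 q u + v2 q * fderiv ℝ v2 q u + fderiv ℝ pr q u)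
        - (fderiv ℝ v1 q u ^ 2 + v1 q * fderiv ℝ (fun p => fderiv ℝ v1 p u) q u
          + (fderiv ℝ v2 q u ^ 2 + v2 q * fderiv ℝ (fun p => fderiv ℝ v2 p u) q u)) := by
  have h1' := differentiable_of_contDiff_infty h1
  have h2' := differentiable_of_contDiff_infty h2
  have hpr' := differentiable_of_contDiff_infty hpr
  have hw' := differentiable_of_contDiff_infty hw
  have hK := differentiable_of_contDiff_infty (contDiff_kineticDensity h1 h2)
  have hd1 := differentiable_of_contDiff_infty (contDiff_fderiv_apply_const h1 (by simp) u)
  have hd2 := differentiable_of_contDiff_infty (contDiff_fderiv_apply_const h2 (by simp) u)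
  have hflux : energyFlux v1 v2 pr w u = fun p => w p * (kineticDensity v1 v2 p + pr p)
      - (v1 p * fderiv ℝ v1 p u + v2 p * fderiv ℝ v2 p u) := funext fun p => by
    rw [energyFlux, fderiv_kineticDensity h1' h2']
  rw [hflux, fderiv_fun_sub (by fun_prop) (by fun_prop),
    fderiv_fun_mul (by fun_prop) (by fun_prop), fderiv_fun_add (by fun_prop) (by fun_prop),
    fderiv_fun_add (by fun_prop) (by fun_prop), fderiv_fun_mul (by fun_prop) (by fun_prop),
    fderiv_fun_mul (by fun_prop) (by fun_prop)]
  simp only [sub_apply, add_apply, smul_apply, smul_eq_mul,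
    fderiv_kineticDensity h1' h2']
  ring

end EnergyDensities

namespace IsClassicalFSISolution

open Function Filter Topology
open scoped ContDiff

variable {ϱ δ β T : ℝ} {f1 f2 v1 v2 pr : ℝ × ℝ × ℝ → ℝ} {η : ℝ × ℝ → ℝ} {η0 : ℝ → ℝ} {x z t : ℝ}

theorem divergence_eventuallyEq_zero
    (S : IsClassicalFSISolution ϱ δ β T f1 f2 v1 v2 pr η η0)
    (ht : t ∈ Ioo 0 T) (hz : z ∈ Ioo 0 (η (x, t))) :
    (fun q => dX v1 q + dZ v2 q) =ᶠ[𝓝 (x, z, t)] fun _ => 0 := by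
  have hη := S.smooth_η.continuous
  have htime : ∀ᶠ q : ℝ × ℝ × ℝ in 𝓝 (x, z, t), q.2.2 ∈ Ioo 0 T :=
    (continuous_snd.comp continuous_snd).continuousAt.eventually_mem (Ioo_mem_nhds ht.1 ht.2)
  have hbottom : ∀ᶠ q : ℝ × ℝ × ℝ in 𝓝 (x, z, t), 0 < q.2.1 :=
    continuousAt_const.eventually_lt (by fun_prop) hz.1
  have htop : ∀ᶠ q : ℝ × ℝ × ℝ in 𝓝 (x, z, t), q.2.1 < η (q.1, q.2.2) :=
    ContinuousAt.eventually_lt (by fun_prop) (by fun_prop) hz.2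
  filter_upwards [htime, hbottom, htop] with q hq₀ hq₁ hq₂
    using S.incompressible _ _ _ hq₀ ⟨hq₁, hq₂⟩

theorem momentum_1_laplacian (S : IsClassicalFSISolution ϱ δ β T f1 f2 v1 v2 pr η η0)
    (ht : t ∈ Ioo 0 T) (hz : z ∈ Ioo 0 (η (x, t))) :
    dT v1 (x, z, t) + v1 (x, z, t) * dX v1 (x, z, t) + v2 (x, z, t) * dZ v1 (x, z, t)
        + dX pr (x, z, t) - (dX (dX v1) (x, z, t) + dZ (dZ v1) (x, z, t))
      = f1 (x, z, t) := by
  have hv1 := S.smooth_v1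
  have hv2 := S.smooth_v2
  have hpr := S.smooth_pr
  have hdiv : dX (fun q => dX v1 q + dZ v2 q) (x, z, t) = 0 := by
    rw [dX, (S.divergence_eventuallyEq_zero ht hz).fderiv_eq]
    simp
  have hdX := (hasDerivAt_dX (f := fun q => dX v1 q + dZ v2 q) (by fun_prop) x z t).unique
    ((hasDerivAt_dX (by fun_prop) x z t).add (hasDerivAt_dX (by fun_prop) x z t))
  have hσ11 := (hasDerivAt_dX (f := fun q => 2 * dX v1 q - pr q) (by fun_prop) x z t).unique
    (((hasDerivAt_dX (by fun_prop) x z t).const_mul 2).sub (hasDerivAt_dX (by fun_prop) x z t))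
  have hσ12 := (hasDerivAt_dZ (f := fun q => dZ v1 q + dX v2 q) (by fun_prop) x z t).unique
    ((hasDerivAt_dZ (by fun_prop) x z t).add (hasDerivAt_dZ (by fun_prop) x z t))
  have hmom := S.momentum_1 x z t ht hz
  rw [hσ11, hσ12, ← dX_dZ_comm (contDiff_infty.1 hv2 2)] at hmom
  linear_combination hmom + hdiv - hdX

theorem momentum_2_laplacian (S : IsClassicalFSISolution ϱ δ β T f1 f2 v1 v2 pr η η0)
    (ht : t ∈ Ioo 0 T) (hz : z ∈ Ioo 0 (η (x, t))) :
    dT v2 (x, z, t) + v1 (x, z, t) * dX v2 (x, z, t) + v2 (x, z, t) * dZ v2 (x, z, t)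
        + dZ pr (x, z, t) - (dX (dX v2) (x, z, t) + dZ (dZ v2) (x, z, t))
      = f2 (x, z, t) := by
  have hv1 := S.smooth_v1
  have hv2 := S.smooth_v2
  have hpr := S.smooth_pr
  have hdiv : dZ (fun q => dX v1 q + dZ v2 q) (x, z, t) = 0 := by
    rw [dZ, (S.divergence_eventuallyEq_zero ht hz).fderiv_eq]
    simp
  have hdZ := (hasDerivAt_dZ (f := fun q => dX v1 q + dZ v2 q) (by fun_prop) x z t).unique
    ((hasDerivAt_dZ (by fun_prop) x z t).add (hasDerivAt_dZ (by fun_prop) x z t))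
  have hσ12 := (hasDerivAt_dX (f := fun q => dZ v1 q + dX v2 q) (by fun_prop) x z t).unique
    ((hasDerivAt_dX (by fun_prop) x z t).add (hasDerivAt_dX (by fun_prop) x z t))
  have hσ22 := (hasDerivAt_dZ (f := fun q => 2 * dZ v2 q - pr q) (by fun_prop) x z t).unique
    (((hasDerivAt_dZ (by fun_prop) x z t).const_mul 2).sub (hasDerivAt_dZ (by fun_prop) x z t))
  have hmom := S.momentum_2 x z t ht hz
  rw [hσ12, hσ22, dX_dZ_comm (contDiff_infty.1 hv1 2)] at hmom
  linear_combination hmom + hdiv - hdZ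

theorem energyDivergence_eq (S : IsClassicalFSISolution ϱ δ β T f1 f2 v1 v2 pr η η0)
    (ht : t ∈ Ioo 0 T) (hz : z ∈ Ioo 0 (η (x, t))) :
    energyDivergence v1 v2 pr (x, z, t)
      = f1 (x, z, t) * v1 (x, z, t) + f2 (x, z, t) * v2 (x, z, t) - gradSq v1 v2 (x, z, t) := by
  have hv1 := S.smooth_v1
  have hv2 := S.smooth_v2
  have hpr := S.smooth_pr
  set q := (x, z, t)
  have hdT : dT (kineticDensity v1 v2) q = v1 q * dT v1 q + v2 q * dT v2 q :=
    fderiv_kineticDensity (by fun_prop) (by fun_prop) _ _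
  have hdX : dX (energyFlux v1 v2 pr v1 (1, 0, 0)) q
      = dX v1 q * (kineticDensity v1 v2 q + pr q)
        + v1 q * (v1 q * dX v1 q + v2 q * dX v2 q + dX pr q)
        - (dX v1 q ^ 2 + v1 q * dX (dX v1) q + (dX v2 q ^ 2 + v2 q * dX (dX v2) q)) :=
    fderiv_energyFlux hv1 hv2 hpr hv1 _ _
  have hdZ : dZ (energyFlux v1 v2 pr v2 (0, 1, 0)) q
      = dZ v2 q * (kineticDensity v1 v2 q + pr q)
        + v2 q * (v1 q * dZ v1 q + v2 q * dZ v2 q + dZ pr q)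
        - (dZ v1 q ^ 2 + v1 q * dZ (dZ v1) q + (dZ v2 q ^ 2 + v2 q * dZ (dZ v2) q)) :=
    fderiv_energyFlux hv1 hv2 hpr hv2 _ _
  rw [energyDivergence, hdT, hdX, hdZ, gradSq]
  linear_combination v1 q * S.momentum_1_laplacian ht hz + v2 q * S.momentum_2_laplacian ht hz
    + (kineticDensity v1 v2 q + pr q) * S.incompressible x z t ht hz

theorem incompressible_interface (S : IsClassicalFSISolution ϱ δ β T f1 f2 v1 v2 pr η η0)
    (ht : t ∈ Ioo 0 T) (x : ℝ) :
    dX v1 (x, η (x, t), t) + dZ v2 (x, η (x, t), t) = 0 := by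
  have hv1 := S.smooth_v1
  have hv2 := S.smooth_v2
  have hpos := S.η_pos x t (Ioo_subset_Icc_self ht)
  have hclosure : EqOn (fun z => dX v1 (x, z, t) + dZ v2 (x, z, t)) (fun _ => 0)
      (closure (Ioo 0 (η (x, t)))) :=
    EqOn.closure (fun z hz => S.incompressible x z t ht hz) (by fun_prop) continuous_const
  rw [closure_Ioo hpos.ne] at hclosure
  exact hclosure (right_mem_Icc.2 hpos.le)

theorem tangential_deriv_v1_interface
    (S : IsClassicalFSISolution ϱ δ β T f1 f2 v1 v2 pr η η0) (ht : t ∈ Icc 0 T) (x : ℝ) :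
    dX v1 (x, η (x, t), t) + eX η (x, t) * dZ v1 (x, η (x, t), t) = 0 := by
  have hv1 := S.smooth_v1
  have hη := S.smooth_η
  have hgraph : HasDerivAt (fun s => (s, η (s, t), t)) (1, eX η (x, t), 0) x :=
    (hasDerivAt_id x).prodMk ((hasDerivAt_eX (by fun_prop) x t).prodMk (hasDerivAt_const x t))
  have htrace : HasDerivAt (fun s => v1 (s, η (s, t), t)) (fderiv ℝ v1 (x, η (x, t), t)
      (1, eX η (x, t), 0)) x :=
    (differentiable_of_contDiff_infty hv1 _).hasFDerivAt.comp_hasDerivAt x hgraph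
  have hzero := htrace.unique
    ((hasDerivAt_const x (0 : ℝ)).congr_of_eventuallyEq (.of_forall (S.kinematic_1 · t ht)))
  rwa [show ((1, eX η (x, t), 0) : ℝ × ℝ × ℝ) = (1, 0, 0) + eX η (x, t) • (0, 1, 0) by simp,
    map_add, map_smul] at hzero

theorem energyFlux_interface (S : IsClassicalFSISolution ϱ δ β T f1 f2 v1 v2 pr η η0)
    (ht : t ∈ Ioo 0 T) (x : ℝ) :
    eT η (x, t) * kineticDensity v1 v2 (x, η (x, t), t)
        + eX η (x, t) * energyFlux v1 v2 pr v1 (1, 0, 0) (x, η (x, t), t)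
        - energyFlux v1 v2 pr v2 (0, 1, 0) (x, η (x, t), t)
        + energyFlux v1 v2 pr v2 (0, 1, 0) (x, 0, t)
      = -(eT η (x, t) * (ϱ * eT (eT η) (x, t) - δ * eX (eX (eT η)) (x, t)
        + β * eX (eX (eX (eX η))) (x, t))) := by
  have ht' := Ioo_subset_Icc_self ht
  obtain ⟨hbottom1, hbottom2⟩ := S.noslip x t ht'
  have hdK := fderiv_kineticDensity (differentiable_of_contDiff_infty S.smooth_v1)
    (differentiable_of_contDiff_infty S.smooth_v2)
  have hincompressible := S.incompressible_interface ht x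
  have htangential := S.tangential_deriv_v1_interface ht' x
  simp only [energyFlux, hdK, hbottom1, hbottom2, S.plate x t ht, kineticDensity,
    S.kinematic_1 x t ht', S.kinematic_2 x t ht', dX, dZ] at hincompressible htangential ⊢
  linear_combination eT η (x, t) * (htangential - hincompressible)

theorem periodic_fst_v1 (S : IsClassicalFSISolution ϱ δ β T f1 f2 v1 v2 pr η η0) :
    Periodic v1 (1, 0, 0) := fun ⟨x, z, t⟩ => by simpa using S.periodic_v1 x z t

theorem periodic_fst_v2 (S : IsClassicalFSISolution ϱ δ β T f1 f2 v1 v2 pr η η0) :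
    Periodic v2 (1, 0, 0) := fun ⟨x, z, t⟩ => by simpa using S.periodic_v2 x z t

theorem periodic_fst_pr (S : IsClassicalFSISolution ϱ δ β T f1 f2 v1 v2 pr η η0) :
    Periodic pr (1, 0, 0) := fun ⟨x, z, t⟩ => by simpa using S.periodic_pr x z t

theorem periodic_fst_η (S : IsClassicalFSISolution ϱ δ β T f1 f2 v1 v2 pr η η0) :
    Periodic η (1, 0) := fun ⟨x, t⟩ => by simpa using S.periodic_η x t

theorem hasDerivAt_energy (S : IsClassicalFSISolution ϱ δ β T f1 f2 v1 v2 pr η η0)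
    (ht : t ∈ Ioo 0 T) :
    HasDerivAt (fun s => subgraphIntegral η (kineticDensity v1 v2) s + plateEnergy ϱ β η s)
      (subgraphIntegral η (energyDivergence v1 v2 pr) t
        - δ * ∫ x in (0 : ℝ)..1, eT (eX η) (x, t) ^ 2) t := by
  have hv1 := S.smooth_v1
  have hv2 := S.smooth_v2
  have hpr := S.smooth_pr
  have hη := S.smooth_η
  have htransport := hasDerivAt_subgraphIntegral_eq_divergence_add_flux
    (h₀ := kineticDensity v1 v2) (h₁ := energyFlux v1 v2 pr v1 (1, 0, 0))
    (h₂ := energyFlux v1 v2 pr v2 (0, 1, 0)) (by fun_prop (disch := simp)) S.periodic_fst_η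
    (by fun_prop (disch := simp)) (by fun_prop (disch := simp))
    (periodic_energyFlux S.periodic_fst_v1 S.periodic_fst_v2 S.periodic_fst_pr
      S.periodic_fst_v1 _) (by fun_prop (disch := simp)) t
  refine (htransport.add (hasDerivAt_plateEnergy hη S.periodic_fst_η ϱ δ β t)).congr_deriv ?_
  simp_rw [S.energyFlux_interface ht, intervalIntegral.integral_neg]
  change subgraphIntegral η (energyDivergence v1 v2 pr) t + _ + _ = _
  ring

theorem hasDerivAt_volume (S : IsClassicalFSISolution ϱ δ β T f1 f2 v1 v2 pr η η0)
    (ht : t ∈ Ioo 0 T) : HasDerivAt (fun s => ∫ x in (0 : ℝ)..1, η (x, s)) 0 t := by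
  have hv1 := S.smooth_v1
  have hv2 := S.smooth_v2
  have hη := S.smooth_η
  have ht' := Ioo_subset_Icc_self ht
  have htransport := hasDerivAt_subgraphIntegral_eq_divergence_add_flux
    (h₀ := fun _ => 1) (h₁ := v1) (h₂ := v2) (by fun_prop (disch := simp)) S.periodic_fst_η
    (by fun_prop) (by fun_prop (disch := simp)) S.periodic_fst_v1 (by fun_prop (disch := simp)) t
  have hvolume : subgraphIntegral η (fun _ => 1) = fun s => ∫ x in (0 : ℝ)..1, η (x, s) :=
    funext fun s => by simp [subgraphIntegral, columnIntegral]
  have hdiv : ∀ x, columnIntegral η (fun q => dT (fun _ => 1) q + dX v1 q + dZ v2 q) (x, t) = 0 :=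
    fun x => (columnIntegral_congr (h := fun _ => 0) (S.η_pos x t ht').le fun z hz => by
      simp [dT, S.incompressible x z t ht hz]).trans (by simp [columnIntegral])
  rw [hvolume] at htransport
  refine htransport.congr_deriv ?_
  simp [subgraphIntegral, hdiv, S.kinematic_1 _ t ht', S.kinematic_2 _ t ht', S.noslip _ t ht']

theorem volume_eq (S : IsClassicalFSISolution ϱ δ β T f1 f2 v1 v2 pr η η0) (ht : t ∈ Ioo 0 T) :
    ∫ x in (0 : ℝ)..1, η (x, t) = ∫ x in (0 : ℝ)..1, η0 x := by
  have hη := S.smooth_η.continuous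
  obtain ⟨s, -, hs⟩ := exists_hasDerivAt_eq_slope (fun s => ∫ x in (0 : ℝ)..1, η (x, s))
    (fun _ => 0) ht.1 (Continuous.continuousOn (by fun_prop))
    fun s hs => S.hasDerivAt_volume ⟨hs.1, hs.2.trans ht.2⟩
  have hzero := (div_eq_zero_iff.1 hs.symm).resolve_right (sub_pos.2 ht.1).ne'
  simpa only [S.init_η] using sub_eq_zero.1 hzero

end IsClassicalFSISolution

section Forcing

open scoped ContDiff

variable {η : ℝ × ℝ → ℝ} {v1 v2 : ℝ × ℝ × ℝ → ℝ} {x t : ℝ}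

theorem columnIntegral_sq_le_mul_columnIntegral_sq_dZ {v : ℝ × ℝ × ℝ → ℝ} (hv : ContDiff ℝ 1 v)
    (hη : 0 ≤ η (x, t)) (hbottom : v (x, 0, t) = 0) :
    columnIntegral η (fun q => v q ^ 2) (x, t)
      ≤ η (x, t) ^ 2 * columnIntegral η (fun q => dZ v q ^ 2) (x, t) := by
  have hdZ := continuous_dZ hv
  simpa only [columnIntegral, sub_zero] using integral_sq_le_mul_integral_sq_deriv
    (fun z _ => hasDerivAt_dZ (hv.differentiable one_ne_zero) x z t)
    (Continuous.continuousOn (by fun_prop)) (left_mem_Icc.2 hη) hbottom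

theorem columnIntegral_kineticDensity_le (hv1 : ContDiff ℝ 1 v1) (hv2 : ContDiff ℝ 1 v2)
    (hη : 0 ≤ η (x, t)) (hbottom1 : v1 (x, 0, t) = 0) (hbottom2 : v2 (x, 0, t) = 0) :
    columnIntegral η (kineticDensity v1 v2) (x, t)
      ≤ η (x, t) ^ 2 / 2 * columnIntegral η (gradSq v1 v2) (x, t) := by
  have hdX1 := continuous_dX hv1
  have hdZ1 := continuous_dZ hv1
  have hdX2 := continuous_dX hv2
  have hdZ2 := continuous_dZ hv2
  calc columnIntegral η (kineticDensity v1 v2) (x, t)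
      = 1 / 2 * (columnIntegral η (fun q => v1 q ^ 2) (x, t)
          + columnIntegral η (fun q => v2 q ^ 2) (x, t)) := by
        unfold kineticDensity
        rw [columnIntegral_const_mul, columnIntegral_add (by fun_prop) (by fun_prop)]
    _ ≤ 1 / 2 * (η (x, t) ^ 2 * columnIntegral η (fun q => dZ v1 q ^ 2) (x, t)
          + η (x, t) ^ 2 * columnIntegral η (fun q => dZ v2 q ^ 2) (x, t)) := by
        gcongr
        · exact columnIntegral_sq_le_mul_columnIntegral_sq_dZ hv1 hη hbottom1
        · exact columnIntegral_sq_le_mul_columnIntegral_sq_dZ hv2 hη hbottom2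
    _ = η (x, t) ^ 2 / 2 * columnIntegral η (fun q => dZ v1 q ^ 2 + dZ v2 q ^ 2) (x, t) := by
        rw [columnIntegral_add (by fun_prop) (by fun_prop)]
        ring
    _ ≤ η (x, t) ^ 2 / 2 * columnIntegral η (gradSq v1 v2) (x, t) := by
        gcongr
        unfold gradSq
        refine columnIntegral_mono hη (by fun_prop) (by fun_prop) fun z _ => ?_
        nlinarith only [sq_nonneg (dX v1 (x, z, t)), sq_nonneg (dX v2 (x, z, t))]

theorem sq_le_volume_sq_add_integral_sq_eX_eX (hη : ContDiff ℝ ∞ η)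
    (hηp : Function.Periodic η (1, 0)) (hx : x ∈ Icc (0 : ℝ) 1) :
    η (x, t) ^ 2 ≤ 2 * (∫ y in (0 : ℝ)..1, η (y, t)) ^ 2
      + 2 * ∫ y in (0 : ℝ)..1, eX (eX η) (y, t) ^ 2 := by
  have hends : η (0, t) = η (1, t) := by simpa using (hηp (0, t)).symm
  simpa only [interval_average_eq, sub_zero, inv_one, one_smul, one_pow, one_mul] using
    sq_le_average_sq_add_integral_sq_deriv_deriv one_pos
    (fun y _ => hasDerivAt_eX (by fun_prop) y t) (fun y _ => hasDerivAt_eX (by fun_prop) y t)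
    (Continuous.continuousOn (by fun_prop)) hends hx

end Forcing

namespace IsClassicalFSISolution

variable {ϱ δ β T Cf : ℝ} {f1 f2 v1 v2 pr : ℝ × ℝ × ℝ → ℝ} {η : ℝ × ℝ → ℝ} {η0 : ℝ → ℝ}
  {x z t : ℝ}

theorem energyDivergence_le (S : IsClassicalFSISolution ϱ δ β T f1 f2 v1 v2 pr η η0)
    (hf : ∀ q, f1 q ^ 2 + f2 q ^ 2 ≤ Cf ^ 2) (ht : t ∈ Ioo 0 T) (hz : z ∈ Ioo 0 (η (x, t))) :
    energyDivergence v1 v2 pr (x, z, t) ≤ Cf ^ 2 / 2 * η (x, t) ^ 2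
      + (1 / η (x, t) ^ 2 * kineticDensity v1 v2 (x, z, t) + -1 * gradSq v1 v2 (x, z, t)) := by
  have hpos := S.η_pos x t (Ioo_subset_Icc_self ht)
  rw [S.energyDivergence_eq ht hz, kineticDensity]
  set H := η (x, t)
  set q := (x, z, t)
  have young : ∀ a b : ℝ, a * b ≤ a ^ 2 * H ^ 2 / 2 + 1 / H ^ 2 * (b ^ 2 / 2) := fun a b => by
    have hdiff : a ^ 2 * H ^ 2 / 2 + 1 / H ^ 2 * (b ^ 2 / 2) - a * b
        = (a * H - b / H) ^ 2 / 2 := by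
      field_simp
      ring
    linarith [sq_nonneg (a * H - b / H)]
  have hforce := mul_le_mul_of_nonneg_right (hf q) (sq_nonneg H)
  linarith [young (f1 q) (v1 q), young (f2 q) (v2 q)]

theorem columnIntegral_energyDivergence_le
    (S : IsClassicalFSISolution ϱ δ β T f1 f2 v1 v2 pr η η0)
    (hf : ∀ q, f1 q ^ 2 + f2 q ^ 2 ≤ Cf ^ 2) (ht : t ∈ Ioo 0 T) (x : ℝ) :
    columnIntegral η (energyDivergence v1 v2 pr) (x, t)
      ≤ Cf ^ 2 / 2 * η (x, t) ^ 3 - 1 / 2 * columnIntegral η (gradSq v1 v2) (x, t) := by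
  have hv1 := S.smooth_v1
  have hv2 := S.smooth_v2
  have hpr := S.smooth_pr
  have ht' := Ioo_subset_Icc_self ht
  have hpos := S.η_pos x t ht'
  have hpoincare := columnIntegral_kineticDensity_le (contDiff_infty.1 hv1 1)
    (contDiff_infty.1 hv2 1) hpos.le (S.noslip x t ht').1 (S.noslip x t ht').2
  have hconst : columnIntegral η (fun _ => Cf ^ 2 / 2 * η (x, t) ^ 2) (x, t)
      = Cf ^ 2 / 2 * η (x, t) ^ 3 := by
    rw [columnIntegral, intervalIntegral.integral_const, smul_eq_mul]
    ring
  calc columnIntegral η (energyDivergence v1 v2 pr) (x, t)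
      ≤ columnIntegral η (fun q => Cf ^ 2 / 2 * η (x, t) ^ 2
          + (1 / η (x, t) ^ 2 * kineticDensity v1 v2 q + -1 * gradSq v1 v2 q)) (x, t) :=
        columnIntegral_mono hpos.le (by fun_prop) (by fun_prop)
          fun z hz => S.energyDivergence_le hf ht hz
    _ = Cf ^ 2 / 2 * η (x, t) ^ 3
          + (1 / η (x, t) ^ 2 * columnIntegral η (kineticDensity v1 v2) (x, t)
            + -1 * columnIntegral η (gradSq v1 v2) (x, t)) := by
        rw [columnIntegral_add (by fun_prop) (by fun_prop), hconst,
          columnIntegral_add (by fun_prop) (by fun_prop), columnIntegral_const_mul,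
          columnIntegral_const_mul]
    _ ≤ Cf ^ 2 / 2 * η (x, t) ^ 3
          + (1 / η (x, t) ^ 2 * (η (x, t) ^ 2 / 2 * columnIntegral η (gradSq v1 v2) (x, t))
            + -1 * columnIntegral η (gradSq v1 v2) (x, t)) := by gcongr
    _ = Cf ^ 2 / 2 * η (x, t) ^ 3 - 1 / 2 * columnIntegral η (gradSq v1 v2) (x, t) := by
        field_simp
        ring

theorem integral_η_cube_le (S : IsClassicalFSISolution ϱ δ β T f1 f2 v1 v2 pr η η0)
    (ht : t ∈ Ioo 0 T) :
    ∫ x in (0 : ℝ)..1, η (x, t) ^ 3 ≤ 2 * (∫ x in (0 : ℝ)..1, η0 x)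
      * ((∫ x in (0 : ℝ)..1, η0 x) ^ 2 + ∫ x in (0 : ℝ)..1, eX (eX η) (x, t) ^ 2) := by
  have hη := S.smooth_η
  rw [← S.volume_eq ht]
  set V := ∫ x in (0 : ℝ)..1, η (x, t)
  set B := ∫ x in (0 : ℝ)..1, eX (eX η) (x, t) ^ 2
  calc ∫ x in (0 : ℝ)..1, η (x, t) ^ 3
      ≤ ∫ x in (0 : ℝ)..1, (2 * V ^ 2 + 2 * B) * η (x, t) := by
        refine integral_mono_on zero_le_one (Continuous.intervalIntegrable (by fun_prop) _ _)
          (Continuous.intervalIntegrable (by fun_prop) _ _) fun x hx => ?_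
        rw [pow_succ]
        exact mul_le_mul_of_nonneg_right
          (sq_le_volume_sq_add_integral_sq_eX_eX hη S.periodic_fst_η hx)
          (S.η_pos x t (Ioo_subset_Icc_self ht)).le
    _ = 2 * V * (V ^ 2 + B) := by
        rw [intervalIntegral.integral_const_mul]
        ring

theorem subgraphIntegral_energyDivergence_add_half_gradSq_le
    (S : IsClassicalFSISolution ϱ δ β T f1 f2 v1 v2 pr η η0)
    (hf : ∀ q, f1 q ^ 2 + f2 q ^ 2 ≤ Cf ^ 2) (ht : t ∈ Ioo 0 T) :
    subgraphIntegral η (energyDivergence v1 v2 pr) t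
        + 1 / 2 * subgraphIntegral η (gradSq v1 v2) t
      ≤ Cf ^ 2 * (∫ x in (0 : ℝ)..1, η0 x)
        * ((∫ x in (0 : ℝ)..1, η0 x) ^ 2 + ∫ x in (0 : ℝ)..1, eX (eX η) (x, t) ^ 2) := by
  have hv1 := S.smooth_v1
  have hv2 := S.smooth_v2
  have hpr := S.smooth_pr
  have hη := S.smooth_η
  have hcolumns : subgraphIntegral η (energyDivergence v1 v2 pr) t
      ≤ ∫ x in (0 : ℝ)..1,
        (Cf ^ 2 / 2 * η (x, t) ^ 3 - 1 / 2 * columnIntegral η (gradSq v1 v2) (x, t)) :=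
    integral_mono_on zero_le_one (Continuous.intervalIntegrable (by fun_prop) _ _)
      (Continuous.intervalIntegrable (by fun_prop) _ _)
      fun x _ => S.columnIntegral_energyDivergence_le hf ht x
  rw [integral_sub (Continuous.intervalIntegrable (by fun_prop) _ _)
    (Continuous.intervalIntegrable (by fun_prop) _ _), intervalIntegral.integral_const_mul,
    intervalIntegral.integral_const_mul] at hcolumns
  have hcube := mul_le_mul_of_nonneg_left (S.integral_η_cube_le ht)
    (by positivity : 0 ≤ Cf ^ 2 / 2)
  rw [subgraphIntegral, subgraphIntegral] at *
  linarith

end IsClassicalFSISolution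

section AccumulatedEnergy

open scoped ContDiff

/-- The total energy of fluid and plate at time `t`, plus the viscous dissipation of the plate and
half that of the fluid up to time `t`. The other half of the fluid dissipation absorbs the work of
the force. -/
def accumulatedEnergy (ϱ δ β : ℝ) (v1 v2 : ℝ × ℝ × ℝ → ℝ) (η : ℝ × ℝ → ℝ) (t : ℝ) : ℝ :=
  subgraphIntegral η (kineticDensity v1 v2) t + plateEnergy ϱ β η t
    + 1 / 2 * (∫ s in (0 : ℝ)..t, subgraphIntegral η (gradSq v1 v2) s)
    + δ * ∫ s in (0 : ℝ)..t, ∫ x in (0 : ℝ)..1, eT (eX η) (x, s) ^ 2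

variable {ϱ δ β t : ℝ} {v1 v2 : ℝ × ℝ × ℝ → ℝ} {η : ℝ × ℝ → ℝ}

theorem continuous_plateEnergy (hη : ContDiff ℝ ∞ η) : Continuous (plateEnergy ϱ β η) := by
  unfold plateEnergy
  fun_prop

theorem continuous_accumulatedEnergy (hv1 : ContDiff ℝ ∞ v1) (hv2 : ContDiff ℝ ∞ v2)
    (hη : ContDiff ℝ ∞ η) : Continuous (accumulatedEnergy ϱ δ β v1 v2 η) := by
  unfold accumulatedEnergy
  have := continuous_plateEnergy (ϱ := ϱ) (β := β) hη
  fun_prop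

theorem subgraphIntegral_nonneg {g : ℝ × ℝ × ℝ → ℝ} (hη : ∀ x, 0 ≤ η (x, t)) (hg : ∀ q, 0 ≤ g q) :
    0 ≤ subgraphIntegral η g t :=
  integral_nonneg zero_le_one fun x _ => integral_nonneg (hη x) fun _ _ => hg _

end AccumulatedEnergy

namespace IsClassicalFSISolution

variable {ϱ δ β T Cf t : ℝ} {f1 f2 v1 v2 pr : ℝ × ℝ × ℝ → ℝ} {η : ℝ × ℝ → ℝ} {η0 : ℝ → ℝ}

theorem hasDerivAt_accumulatedEnergy (S : IsClassicalFSISolution ϱ δ β T f1 f2 v1 v2 pr η η0)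
    (ht : t ∈ Ioo 0 T) :
    HasDerivAt (accumulatedEnergy ϱ δ β v1 v2 η)
      (subgraphIntegral η (energyDivergence v1 v2 pr) t
        + 1 / 2 * subgraphIntegral η (gradSq v1 v2) t) t := by
  have hv1 := S.smooth_v1
  have hv2 := S.smooth_v2
  have hη := S.smooth_η
  have hfluid := Continuous.integral_hasStrictDerivAt
    (f := subgraphIntegral η (gradSq v1 v2)) (by fun_prop) 0 t
  have hplate := Continuous.integral_hasStrictDerivAt
    (f := fun s => ∫ x in (0 : ℝ)..1, eT (eX η) (x, s) ^ 2) (by fun_prop) 0 t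
  exact (((S.hasDerivAt_energy ht).add (hfluid.hasDerivAt.const_mul (1 / 2))).add
    (hplate.hasDerivAt.const_mul δ)).congr_deriv (by ring)

theorem bendingEnergy_le_accumulatedEnergy
    (S : IsClassicalFSISolution ϱ δ β T f1 f2 v1 v2 pr η η0) (hϱ : 0 ≤ ϱ) (hδ : 0 ≤ δ)
    (ht : t ∈ Icc 0 T) :
    β / 2 * ∫ x in (0 : ℝ)..1, eX (eX η) (x, t) ^ 2 ≤ accumulatedEnergy ϱ δ β v1 v2 η t := by
  have hηnonneg : ∀ s ∈ Icc 0 t, ∀ x, 0 ≤ η (x, s) :=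
    fun s hs x => (S.η_pos x s ⟨hs.1, hs.2.trans ht.2⟩).le
  have hkinetic := subgraphIntegral_nonneg (hηnonneg t (right_mem_Icc.2 ht.1))
    (kineticDensity_nonneg (v1 := v1) (v2 := v2))
  have hfluid : 0 ≤ ∫ s in (0 : ℝ)..t, subgraphIntegral η (gradSq v1 v2) s :=
    integral_nonneg ht.1 fun s hs => subgraphIntegral_nonneg (hηnonneg s hs) gradSq_nonneg
  have hinertia : 0 ≤ ∫ x in (0 : ℝ)..1, eT η (x, t) ^ 2 :=
    integral_nonneg zero_le_one fun _ _ => sq_nonneg _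
  have hplate : 0 ≤ ∫ s in (0 : ℝ)..t, ∫ x in (0 : ℝ)..1, eT (eX η) (x, s) ^ 2 :=
    integral_nonneg ht.1 fun s _ => integral_nonneg zero_le_one fun _ _ => sq_nonneg _
  unfold accumulatedEnergy plateEnergy
  linarith [mul_nonneg (div_nonneg hϱ zero_le_two) hinertia, mul_nonneg hδ hplate]

theorem eX_eX_zero (S : IsClassicalFSISolution ϱ δ β T f1 f2 v1 v2 pr η η0) (x : ℝ) :
    eX (eX η) (x, 0) = deriv (deriv η0) x := by
  have hη := S.smooth_η
  have hderiv : deriv η0 = fun y => eX η (y, 0) := by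
    rw [← funext S.init_η]
    exact funext fun y => (hasDerivAt_eX (by fun_prop) y 0).deriv
  rw [hderiv, (hasDerivAt_eX (by fun_prop) x 0).deriv]

theorem accumulatedEnergy_zero (S : IsClassicalFSISolution ϱ δ β T f1 f2 v1 v2 pr η η0) :
    accumulatedEnergy ϱ δ β v1 v2 η 0
      = β / 2 * ∫ x in (0 : ℝ)..1, deriv (deriv η0) x ^ 2 := by
  simp [accumulatedEnergy, plateEnergy, subgraphIntegral, columnIntegral, kineticDensity,
    S.init_v, S.init_ηt, S.eX_eX_zero]

theorem accumulatedEnergy_le_mul_exp (S : IsClassicalFSISolution ϱ δ β T f1 f2 v1 v2 pr η η0)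
    (hϱ : 0 ≤ ϱ) (hδ : 0 ≤ δ) (hβ : 0 < β) (hf : ∀ q, f1 q ^ 2 + f2 q ^ 2 ≤ Cf ^ 2)
    (ht : t ∈ Ioo 0 T) :
    accumulatedEnergy ϱ δ β v1 v2 η t
      ≤ β / 2 * ((∫ x in (0 : ℝ)..1, deriv (deriv η0) x ^ 2) + (∫ x in (0 : ℝ)..1, η0 x) ^ 2)
        * Real.exp (2 * Cf ^ 2 * (∫ x in (0 : ℝ)..1, η0 x) / β * t) := by
  set V := ∫ x in (0 : ℝ)..1, η0 x
  have hV : 0 ≤ V := integral_nonneg zero_le_one fun x _ => (S.init_η_pos x).le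
  have hmem : ∀ s ∈ Ioo 0 t, s ∈ Ioo 0 T := fun s hs => ⟨hs.1, hs.2.trans ht.2⟩
  have hrate : ∀ s ∈ Ioo 0 t, subgraphIntegral η (energyDivergence v1 v2 pr) s
      + 1 / 2 * subgraphIntegral η (gradSq v1 v2) s
      ≤ 2 * Cf ^ 2 * V / β * (accumulatedEnergy ϱ δ β v1 v2 η s + β / 2 * V ^ 2) := by
    intro s hs
    have hbending := S.bendingEnergy_le_accumulatedEnergy hϱ hδ
      (Ioo_subset_Icc_self (hmem s hs))
    calc subgraphIntegral η (energyDivergence v1 v2 pr) s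
          + 1 / 2 * subgraphIntegral η (gradSq v1 v2) s
        ≤ Cf ^ 2 * V * (V ^ 2 + ∫ x in (0 : ℝ)..1, eX (eX η) (x, s) ^ 2) :=
          S.subgraphIntegral_energyDivergence_add_half_gradSq_le hf (hmem s hs)
      _ = 2 * Cf ^ 2 * V / β
          * (β / 2 * (∫ x in (0 : ℝ)..1, eX (eX η) (x, s) ^ 2) + β / 2 * V ^ 2) := by
          field_simp
          ring
      _ ≤ _ := by gcongr
  have hcont := (continuous_accumulatedEnergy (ϱ := ϱ) (δ := δ) (β := β) S.smooth_v1 S.smooth_v2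
    S.smooth_η).add (continuous_const (y := β / 2 * V ^ 2))
  have hgronwall := le_mul_exp_of_hasDerivAt_le_mul ht.1.le hcont.continuousOn
    (fun s hs => (S.hasDerivAt_accumulatedEnergy (hmem s hs)).add_const _) hrate
  rw [Pi.add_apply, Pi.add_apply, S.accumulatedEnergy_zero, ← mul_add, sub_zero] at hgronwall
  exact (le_add_of_nonneg_right (by positivity)).trans hgronwall

theorem accumulatedEnergy_eq (S : IsClassicalFSISolution ϱ δ β T f1 f2 v1 v2 pr η η0)
    (ht : t ∈ Icc 0 T) :
    accumulatedEnergy ϱ δ β v1 v2 η t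
      = 1 / 2 * (∫ p in {p : ℝ × ℝ | p.1 ∈ Ioo (0 : ℝ) 1 ∧ p.2 ∈ Ioo 0 (η (p.1, t))},
          (v1 (p.1, p.2, t) ^ 2 + v2 (p.1, p.2, t) ^ 2))
        + 1 / 2 * (∫ s in (0 : ℝ)..t,
          ∫ p in {p : ℝ × ℝ | p.1 ∈ Ioo (0 : ℝ) 1 ∧ p.2 ∈ Ioo 0 (η (p.1, s))},
            (dX v1 (p.1, p.2, s) ^ 2 + dZ v1 (p.1, p.2, s) ^ 2
              + dX v2 (p.1, p.2, s) ^ 2 + dZ v2 (p.1, p.2, s) ^ 2))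
        + ϱ / 2 * (∫ x in (0 : ℝ)..1, eT η (x, t) ^ 2)
        + δ * (∫ s in (0 : ℝ)..t, ∫ x in (0 : ℝ)..1, eT (eX η) (x, s) ^ 2)
        + β / 2 * ∫ x in (0 : ℝ)..1, eX (eX η) (x, t) ^ 2 := by
  have hv1 := S.smooth_v1
  have hv2 := S.smooth_v2
  have hηnonneg : ∀ s ∈ Icc 0 t, ∀ x, 0 ≤ η (x, s) :=
    fun s hs x => (S.η_pos x s ⟨hs.1, hs.2.trans ht.2⟩).le
  have hkinetic := setIntegral_subgraph S.smooth_η.continuous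
    (g := kineticDensity v1 v2) (by fun_prop) (hηnonneg t (right_mem_Icc.2 ht.1))
  have hfluid : ∫ s in (0 : ℝ)..t, subgraphIntegral η (gradSq v1 v2) s = ∫ s in (0 : ℝ)..t,
      ∫ p in {p : ℝ × ℝ | p.1 ∈ Ioo (0 : ℝ) 1 ∧ p.2 ∈ Ioo 0 (η (p.1, s))},
        gradSq v1 v2 (p.1, p.2, s) := by
    refine integral_congr fun s hs => ?_
    rw [uIcc_of_le ht.1] at hs
    exact (setIntegral_subgraph S.smooth_η.continuous (by fun_prop) (hηnonneg s hs)).symm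
  rw [accumulatedEnergy, plateEnergy, hfluid, ← hkinetic]
  simp only [kineticDensity, gradSq, MeasureTheory.integral_const_mul]
  ring

end IsClassicalFSISolution

theorem stmt_8_general (β : ℝ) (hβ : 0 < β) (η0 : ℝ → ℝ) (Cf T : ℝ) :
    ∃ C > (0 : ℝ), ∀ ε > (0 : ℝ), ∀ ϱ ≥ (0 : ℝ), ∀ δ ≥ (0 : ℝ),
      ∀ (f1 f2 v1 v2 pr : ℝ × ℝ × ℝ → ℝ) (η : ℝ × ℝ → ℝ),
        IsClassicalFSISolution ϱ δ (β / ε) (T / ε ^ 2) f1 f2 v1 v2 pr η (fun x => ε * η0 x) →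
        (∀ q, f1 q ^ 2 + f2 q ^ 2 ≤ Cf ^ 2) →
        ∀ t ∈ Ioo (0 : ℝ) (T / ε ^ 2), accumulatedEnergy ϱ δ (β / ε) v1 v2 η t ≤ C * ε := by
  set V := ∫ x in (0 : ℝ)..1, η0 x
  set D := ∫ x in (0 : ℝ)..1, deriv (deriv η0) x ^ 2
  have hD : 0 ≤ D := integral_nonneg zero_le_one fun _ _ => sq_nonneg _
  refine ⟨β / 2 * (D + V ^ 2 + 1) * Real.exp (2 * Cf ^ 2 * V / β * T), by positivity, ?_⟩
  intro ε hε ϱ hϱ δ hδ f1 f2 v1 v2 pr η S hf t ht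
  have hV : 0 ≤ V := integral_nonneg zero_le_one fun x _ =>
    (pos_of_mul_pos_right (S.init_η_pos x) hε.le).le
  have hVε : ∫ x in (0 : ℝ)..1, ε * η0 x = ε * V := intervalIntegral.integral_const_mul _ _
  have hDε : ∫ x in (0 : ℝ)..1, deriv (deriv fun y => ε * η0 y) x ^ 2 = ε ^ 2 * D := by
    simp only [deriv_const_mul_field', mul_pow]
    exact intervalIntegral.integral_const_mul _ _
  have htime : t * ε ^ 2 ≤ T := ((lt_div_iff₀ (by positivity)).1 ht.2).le
  calc accumulatedEnergy ϱ δ (β / ε) v1 v2 η t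
      ≤ β / ε / 2 * (ε ^ 2 * D + (ε * V) ^ 2)
          * Real.exp (2 * Cf ^ 2 * (ε * V) / (β / ε) * t) := by
        simpa only [hVε, hDε] using S.accumulatedEnergy_le_mul_exp hϱ hδ (by positivity) hf ht
    _ = β / 2 * (D + V ^ 2) * Real.exp (2 * Cf ^ 2 * V / β * (t * ε ^ 2)) * ε := by
        field_simp
    _ ≤ β / 2 * (D + V ^ 2 + 1) * Real.exp (2 * Cf ^ 2 * V / β * T) * ε := by
        gcongr β / 2 * ?_ * Real.exp (_ * ?_) * ε
        exact (lt_add_one _).le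

/-- Proposition 2.2, the key quantitative energy estimate (2.11) under
the scaling assumptions (S1)–(S4), in the original time variable.
For `r ∈ [1,3]`, hatted coefficients `ϱ̂, δ̂, β̂ > 0`, a positive 1-periodic C⁴ initial
displacement `η₀` and a force bound `C_f`, there are `C > 0` and `ε₀ ∈ (0,1]` such that
for all `ε ∈ (0,ε₀]`: every classical solution of the FSI problem on `[0, ε⁻²T]` with
coefficients `ϱ = ϱ̂ε`, `δ = δ̂ε⁻ʳ`, `β = β̂ε⁻¹`, initial displacement `ε·η₀` and force
with `sup|f| ≤ C_f` satisfies, for every `t ∈ (0, ε⁻²T)`,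
`(1/2)‖v(t)‖² + (1/2)∫₀ᵗ‖∇v‖² + (ϱ̂ε/2)‖∂ₜη(t)‖² + δ̂ε⁻ʳ∫₀ᵗ‖∂ₜ∂ₓη‖²
  + (β̂/(2ε))‖∂ₓ²η(t)‖² ≤ C·ε`. -/
theorem stmt_8 (r : ℝ) (hr : r ∈ Icc (1:ℝ) 3)
    (ϱ δ β : ℝ) (hϱ : 0 < ϱ) (hδ : 0 < δ) (hβ : 0 < β)
    (η0 : ℝ → ℝ) (hη0 : ContDiff ℝ 4 η0) (hη0per : ∀ x, η0 (x + 1) = η0 x)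
    (hη0pos : ∀ x, 0 < η0 x)
    (Cf T : ℝ) (hCf : 0 < Cf) (hT : 0 < T) :
    ∃ C > (0:ℝ), ∃ ε₀ ∈ Ioc (0:ℝ) 1, ∀ ε ∈ Ioc (0:ℝ) ε₀,
      ∀ (f1 f2 v1 v2 pr : ℝ × ℝ × ℝ → ℝ) (η : ℝ × ℝ → ℝ),
        IsClassicalFSISolution (ϱ * ε) (δ * ε ^ (-r)) (β / ε) (T / ε ^ 2)
          f1 f2 v1 v2 pr η (fun x => ε * η0 x) →
        (∀ q : ℝ × ℝ × ℝ, f1 q ^ 2 + f2 q ^ 2 ≤ Cf ^ 2) →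
        ∀ t ∈ Ioo (0:ℝ) (T / ε ^ 2),
          1 / 2 * (∫ p in {p : ℝ × ℝ | p.1 ∈ Ioo (0:ℝ) 1 ∧ p.2 ∈ Ioo 0 (η (p.1, t))},
              (v1 (p.1, p.2, t) ^ 2 + v2 (p.1, p.2, t) ^ 2))
          + 1 / 2 * (∫ s in (0:ℝ)..t,
              ∫ p in {p : ℝ × ℝ | p.1 ∈ Ioo (0:ℝ) 1 ∧ p.2 ∈ Ioo 0 (η (p.1, s))},
                ((dX v1 (p.1, p.2, s)) ^ 2 + (dZ v1 (p.1, p.2, s)) ^ 2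
                  + (dX v2 (p.1, p.2, s)) ^ 2 + (dZ v2 (p.1, p.2, s)) ^ 2))
          + ϱ * ε / 2 * (∫ x in (0:ℝ)..1, (eT η (x, t)) ^ 2)
          + δ * ε ^ (-r) * (∫ s in (0:ℝ)..t, ∫ x in (0:ℝ)..1, (eT (eX η) (x, s)) ^ 2)
          + β / (2 * ε) * (∫ x in (0:ℝ)..1, (eX (eX η) (x, t)) ^ 2)
        ≤ C * ε := by
  obtain ⟨C, hC, hbound⟩ := stmt_8_general β hβ η0 Cf T
  refine ⟨C, hC, 1, by simp, ?_⟩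
  rintro ε ⟨hε, -⟩ f1 f2 v1 v2 pr η S hf t ht
  have henergy := hbound ε hε _ (by positivity) _ (by positivity) f1 f2 v1 v2 pr η S hf t ht
  rwa [S.accumulatedEnergy_eq (Ioo_subset_Icc_self ht), div_div, mul_comm ε] at henergy

end
end
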